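/- arXiv:1107.4879 — 10 statements merged into one kernel-verified Lean document; each statement's English description precedes it below -/
import Mathlib

section
/- If a graph G has a spanning k-edge-colorable subgraph, then G has a subgraph that is simultaneously spanning and a maximum k-edge-colorable subgraph of G. -/
/-!
Fix a spanning `k`-edge-colorable subgraph with edge set `S`. Among all `k`-edge-colorable edge
sets of `G` of maximum size, choose `M` with `|M ∩ S|` as large as possible. Then `M` is spanning.

Indeed, suppose `M` misses a vertex `v`, and let `wv ∈ S`. If some color were missing at `w` in a
coloring of `M`, the edge `wv` could be added with that color, since no color is used at `v`; this
contradicts the maximum size. Hence `M` has `k` edges at `w`. As `S` has at most `k` edges at `w`,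
one of them being `wv ∉ M`, some edge `e ∈ M` at `w` is not in `S`. Replacing `e` by `wv`, with the
color of `e`, gives a `k`-edge-colorable set of the same size which has one more edge in
common with `S` (`exists_improvement`), a contradiction.

The argument is carried out on finite sets of edges; `edgeColorable_iff` and `subgraphOfEdges`
translate between these and subgraphs.
-/

open SimpleGraph

variable {V : Type*}

/-- A subgraph is spanning if every vertex of the host graph has a neighbor in it. -/
def SpanningSub {G : SimpleGraph V} (H : G.Subgraph) : Prop :=
  ∀ v : V, ∃ w : V, H.Adj v w

/-- A subgraph is `k`-edge-colorable if its edges can be properly colored with `k` colors,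
i.e. its edge set can be partitioned into `k` matchings. -/
def EdgeColorable {G : SimpleGraph V} (H : G.Subgraph) (k : ℕ) : Prop :=
  ∃ f : H.edgeSet → Fin k, ∀ e₁ e₂ : H.edgeSet, e₁ ≠ e₂ →
    (∃ v : V, v ∈ (e₁ : Sym2 V) ∧ v ∈ (e₂ : Sym2 V)) → f e₁ ≠ f e₂

/-- A maximum `k`-edge-colorable subgraph: `k`-edge-colorable with as many edges as possible. -/
def MaximumEdgeColorable {G : SimpleGraph V} (H : G.Subgraph) (k : ℕ) : Prop :=
  EdgeColorable H k ∧
    ∀ H' : G.Subgraph, EdgeColorable H' k → H'.edgeSet.ncard ≤ H.edgeSet.ncard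

/-- `sp G`: the least `k` such that `G` has a spanning `k`-edge-colorable subgraph. -/
noncomputable def sp (G : SimpleGraph V) : ℕ :=
  sInf {k | ∃ H : G.Subgraph, SpanningSub H ∧ EdgeColorable H k}

/-- Maximum degree. -/
noncomputable def maxDeg (G : SimpleGraph V) : ℕ :=
  sSup (Set.range fun v : V => (G.neighborSet v).ncard)

/-- Minimum degree. -/
noncomputable def minDeg (G : SimpleGraph V) : ℕ :=
  sInf (Set.range fun v : V => (G.neighborSet v).ncard)

/-- Matching number. -/
noncomputable def matchNum (G : SimpleGraph V) : ℕ :=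
  sSup {n | ∃ M : G.Subgraph, M.IsMatching ∧ M.edgeSet.ncard = n}

/-- The map `c` restricts to a proper edge coloring of the edge set `E`. It is defined on all of
`Sym2 V` so that the same map can be used for different edge sets. -/
def ProperOn {k : ℕ} (E : Finset (Sym2 V)) (c : Sym2 V → Fin k) : Prop :=
  ∀ e₁ ∈ E, ∀ e₂ ∈ E, e₁ ≠ e₂ → (∃ v, v ∈ e₁ ∧ v ∈ e₂) → c e₁ ≠ c e₂

/-- The subgraph of `G` on all vertices with edge set `E`. -/
def subgraphOfEdges (G : SimpleGraph V) (E : Set (Sym2 V)) (hE : E ⊆ G.edgeSet) :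
    G.Subgraph where
  verts := Set.univ
  Adj a b := s(a, b) ∈ E
  adj_sub h := hE h
  edge_vert _ := Set.mem_univ _
  symm := ⟨fun a b h => by rwa [Sym2.eq_swap]⟩

lemma edgeSet_subgraphOfEdges (G : SimpleGraph V) (E : Set (Sym2 V)) (hE : E ⊆ G.edgeSet) :
    (subgraphOfEdges G E hE).edgeSet = E := by
  ext e
  induction e with
  | _ a b => rfl

/-- For `k = 0` and `H` edgeless the right-hand side fails as soon as `V` is nonempty,
hence the hypothesis on `k`. -/
lemma edgeColorable_iff {G : SimpleGraph V} {k : ℕ} (hk : 0 < k) (H : G.Subgraph)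
    (E : Finset (Sym2 V)) (hE : H.edgeSet = E) :
    EdgeColorable H k ↔ ∃ c : Sym2 V → Fin k, ProperOn E c := by
  classical
  have hmem : ∀ e, e ∈ H.edgeSet ↔ e ∈ E := fun e => by rw [hE]; simp
  constructor
  · rintro ⟨f, hf⟩
    refine ⟨fun e => if he : e ∈ H.edgeSet then f ⟨e, he⟩ else ⟨0, hk⟩, ?_⟩
    intro e₁ h₁ e₂ h₂ hne hv
    rw [← hmem] at h₁ h₂
    simp only [h₁, h₂, dif_pos]
    exact hf ⟨e₁, h₁⟩ ⟨e₂, h₂⟩ (fun h => hne (congrArg Subtype.val h)) hv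
  · rintro ⟨c, hc⟩
    exact ⟨fun e => c e, fun e₁ e₂ hne hv => hc e₁ ((hmem _).1 e₁.2) e₂ ((hmem _).1 e₂.2)
      (fun h => hne (Subtype.ext h)) hv⟩

lemma ProperOn.mono {k : ℕ} {E F : Finset (Sym2 V)} {c : Sym2 V → Fin k} (h : ProperOn E c)
    (hF : F ⊆ E) : ProperOn F c :=
  fun e₁ h₁ e₂ h₂ => h e₁ (hF h₁) e₂ (hF h₂)

/-- An edge `wv` can be added with color `i` if `v` is uncovered and `i` is missing at `w`. -/
lemma ProperOn.insert [DecidableEq V] {k : ℕ} {E : Finset (Sym2 V)} {c : Sym2 V → Fin k}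
    (h : ProperOn E c) {v w : V} {i : Fin k} (hv : ∀ e ∈ E, v ∉ e)
    (hw : ∀ e ∈ E, w ∈ e → c e ≠ i) :
    ProperOn (insert s(w, v) E) (Function.update c s(w, v) i) := by
  have hnot : ∀ e ∈ E, e ≠ s(w, v) := by
    rintro e he rfl
    exact hv _ he (Sym2.mem_mk_right _ _)
  have key : ∀ e ∈ E, (∃ x, x ∈ s(w, v) ∧ x ∈ e) → c e ≠ i := by
    rintro e he ⟨x, hx, hxe⟩
    rcases Sym2.mem_iff.1 hx with rfl | rfl
    · exact hw e he hxe
    · exact absurd hxe (hv e he)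
  intro e₁ h₁ e₂ h₂ hne hs
  rcases Finset.mem_insert.1 h₁ with rfl | h₁ <;> rcases Finset.mem_insert.1 h₂ with rfl | h₂
  · exact absurd rfl hne
  · rw [Function.update_self, Function.update_of_ne (hnot _ h₂)]
    exact (key _ h₂ hs).symm
  · rw [Function.update_self, Function.update_of_ne (hnot _ h₁)]
    exact key _ h₁ (hs.imp fun _ => And.symm)
  · rw [Function.update_of_ne (hnot _ h₁), Function.update_of_ne (hnot _ h₂)]
    exact h _ h₁ _ h₂ hne hs

/-- If `M` misses `v` and `wv ∈ S`, then either `wv` can be added to `M`, or it can replace an edge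
of `M` outside `S`. -/
lemma exists_improvement [DecidableEq V] {k : ℕ} {M S : Finset (Sym2 V)} {c d : Sym2 V → Fin k}
    (hM : ProperOn M c) (hS : ProperOn S d) {v w : V} (hv : ∀ e ∈ M, v ∉ e)
    (hwv : s(w, v) ∈ S) :
    (∃ c' : Sym2 V → Fin k, ProperOn (insert s(w, v) M) c') ∨
      ∃ e ∈ M, e ∉ S ∧ ∃ c' : Sym2 V → Fin k, ProperOn (insert s(w, v) (M.erase e)) c' := by
  by_cases hi : ∃ i, ∀ e ∈ M, w ∈ e → c e ≠ i
  · obtain ⟨i, hi⟩ := hi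
    exact .inl ⟨_, hM.insert hv hi⟩
  right
  push Not at hi
  obtain ⟨e, he, hwe, heS⟩ : ∃ e ∈ M, w ∈ e ∧ e ∉ S := by
    by_contra! hsub
    have h1 : k ≤ (M.filter (w ∈ ·)).card := by
      have : (Finset.univ : Finset (Fin k)) ⊆ (M.filter (w ∈ ·)).image c := by
        intro i _
        obtain ⟨e, he, hwe, hc⟩ := hi i
        exact Finset.mem_image.2 ⟨e, Finset.mem_filter.2 ⟨he, hwe⟩, hc⟩
      simpa using (Finset.card_le_card this).trans Finset.card_image_le
    have h2 : (S.filter (w ∈ ·)).card ≤ k := by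
      have hinj : Set.InjOn d (S.filter (w ∈ ·) : Finset (Sym2 V)) := by
        intro e₁ h₁ e₂ h₂ heq
        simp only [Finset.coe_filter, Set.mem_ofPred_eq] at h₁ h₂
        by_contra hne
        exact hS e₁ h₁.1 e₂ h₂.1 hne ⟨w, h₁.2, h₂.2⟩ heq
      simpa using Finset.card_le_card_of_injOn d (fun _ _ => Finset.mem_univ _) hinj
    have h3 : (M.filter (w ∈ ·)).card < (S.filter (w ∈ ·)).card := by
      refine Finset.card_lt_card (Finset.ssubset_iff_of_subset ?_ |>.2 ⟨s(w, v), ?_, ?_⟩)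
      · intro e he
        rw [Finset.mem_filter] at he ⊢
        exact ⟨hsub e he.1 he.2, he.2⟩
      · exact Finset.mem_filter.2 ⟨hwv, Sym2.mem_mk_left _ _⟩
      · exact fun h => hv _ (Finset.mem_filter.1 h).1 (Sym2.mem_mk_right _ _)
    omega
  refine ⟨e, he, heS, _, (hM.mono (M.erase_subset e)).insert (i := c e)
    (fun e' he' => hv e' (Finset.mem_of_mem_erase he')) ?_⟩
  intro e' he' hwe'
  exact hM e' (Finset.mem_of_mem_erase he') e he (Finset.ne_of_mem_erase he') ⟨w, hwe', hwe⟩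

/-- If a graph has a spanning `k`-edge-colorable subgraph, then it has a subgraph that is
simultaneously spanning and a maximum `k`-edge-colorable subgraph. -/
theorem spanning_maximum_k_edge_colorable_subgraph_exists
    {V : Type*} [Fintype V] (G : SimpleGraph V) (k : ℕ)
    (h : ∃ H : G.Subgraph, SpanningSub H ∧ EdgeColorable H k) :
    ∃ H : G.Subgraph, SpanningSub H ∧ MaximumEdgeColorable H k := by
  classical
  obtain ⟨H, hsp, hcol⟩ := h
  rcases isEmpty_or_nonempty V with hV | ⟨⟨v₀⟩⟩
  · refine ⟨H, hsp, hcol, fun H' _ => ?_⟩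
    rw [Set.eq_empty_of_isEmpty H'.edgeSet]
    simp
  -- `H` has an edge at `v₀`, whose color witnesses `0 < k`.
  have hk : 0 < k := by
    obtain ⟨f, -⟩ := hcol
    obtain ⟨w, hw⟩ := hsp v₀
    exact (Nat.zero_le _).trans_lt (f ⟨s(v₀, w), hw⟩).2
  have hfin : ∀ K : G.Subgraph, K.edgeSet = (K.edgeSet.toFinset : Finset (Sym2 V)) :=
    fun K => by simp
  obtain ⟨S, hHS⟩ : ∃ S : Finset (Sym2 V), H.edgeSet = S := ⟨_, hfin H⟩
  obtain ⟨d, hd⟩ := (edgeColorable_iff hk H S hHS).1 hcol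
  -- The `k`-edge-colorable edge sets of `G`, and those of maximum size.
  let A : Finset (Finset (Sym2 V)) := Finset.univ.filter fun E =>
    (E : Set (Sym2 V)) ⊆ G.edgeSet ∧ ∃ c : Sym2 V → Fin k, ProperOn E c
  have memA : ∀ E, E ∈ A ↔ (E : Set (Sym2 V)) ⊆ G.edgeSet ∧
      ∃ c : Sym2 V → Fin k, ProperOn E c := fun E => by simp [A]
  have hSG : (S : Set (Sym2 V)) ⊆ G.edgeSet := hHS ▸ H.edgeSet_subset
  obtain ⟨M₀, hM₀, hmax₀⟩ := A.exists_max_image Finset.card ⟨S, (memA S).2 ⟨hSG, d, hd⟩⟩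
  let B := A.filter fun E => E.card = M₀.card
  obtain ⟨M, hMB, hmaxB⟩ := B.exists_max_image (fun E => (E ∩ S).card)
    ⟨M₀, Finset.mem_filter.2 ⟨hM₀, rfl⟩⟩
  obtain ⟨hMA, hMcard⟩ := Finset.mem_filter.1 hMB
  obtain ⟨hMG, c, hc⟩ := (memA M).1 hMA
  have hedge := edgeSet_subgraphOfEdges G M hMG
  refine ⟨subgraphOfEdges G M hMG, ?_, (edgeColorable_iff hk _ M hedge).2 ⟨c, hc⟩, ?_⟩
  · intro v
    by_contra! hno
    have hv : ∀ e ∈ M, v ∉ e := by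
      rintro e he hve
      obtain ⟨w, rfl⟩ := Sym2.mem_iff_exists.1 hve
      exact hno w he
    obtain ⟨w, hw⟩ := hsp v
    have hwv : s(w, v) ∈ S := by
      have : s(v, w) ∈ H.edgeSet := hw
      rw [hHS, Sym2.eq_swap] at this
      exact this
    have hwvM : s(w, v) ∉ M := fun h => hv _ h (Sym2.mem_mk_right _ _)
    rcases exists_improvement hc hd hv hwv with ⟨c', hc'⟩ | ⟨e, he, heS, c', hc'⟩
    · have hle := hmax₀ _ ((memA _).2 ⟨by
        rw [Finset.coe_insert]
        exact Set.insert_subset (hSG hwv) hMG, c', hc'⟩)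
      rw [Finset.card_insert_of_notMem hwvM] at hle
      omega
    · have hnot : s(w, v) ∉ M.erase e := fun h => hwvM (Finset.mem_of_mem_erase h)
      have hle := hmaxB (insert s(w, v) (M.erase e)) (Finset.mem_filter.2 ⟨(memA _).2 ⟨by
        rw [Finset.coe_insert]
        exact Set.insert_subset (hSG hwv)
          ((Finset.coe_subset.2 (M.erase_subset e)).trans hMG), c', hc'⟩, by
        rw [Finset.card_insert_of_notMem hnot, Finset.card_erase_add_one he, hMcard]⟩)
      have heq : insert s(w, v) (M.erase e) ∩ S = insert s(w, v) (M ∩ S) := by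
        ext x
        simp only [Finset.mem_inter, Finset.mem_insert, Finset.mem_erase]
        grind
      rw [heq, Finset.card_insert_of_notMem
        (fun h => hwvM (Finset.mem_inter.1 h).1)] at hle
      omega
  · intro H' hH'
    have hle := hmax₀ H'.edgeSet.toFinset ((memA _).2
      ⟨by rw [← hfin]; exact H'.edgeSet_subset, (edgeColorable_iff hk H' _ (hfin H')).1 hH'⟩)
    rw [hedge, hfin H', Set.ncard_coe_finset, Set.ncard_coe_finset, hMcard]
    exact hle
end

section
/- If G is a connected graph without isolated vertices satisfying sp(G) = Δ(G), then G is either an odd cycle or a tree. -/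
/-!
The number `sp G` is at most `k` as soon as `G` has a spanning subgraph all of whose degrees lie
between `1` and `k` (`sp_le_of_cover`): an inclusion-minimal such subgraph is a disjoint union of
stars, and stars with at most `k` edges are `k`-edge-colorable. Hence it suffices to show that a
connected graph `G` with a cycle `C`, other than an odd cycle, has a spanning subgraph with all
degrees between `1` and `Δ(G) - 1`.

If `Δ(G) ≥ 3`, fix a root on `C` and let `f` send every vertex of `C` to its successor on `C` and
every other vertex to a neighbor closer to the root. Going through the vertices from the farthest
to the closest, select `v` exactly when no off-cycle `u` with `f u = v` has been selected. The
edges `v (f v)` with `v` selected cover every vertex. A selected vertex `v` has degree at most `2`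
there: its neighbors are `f v` and possibly its predecessor on `C`. A vertex that is not selected
is not joined to `f v`, hence has degree at most `Δ(G) - 1` (`sp_lt_of_cycle`).

If `Δ(G) ≤ 2`, connectedness forces `G` to be the cycle `C`, and an even cycle has a perfect
matching (`cycle_of_deg_le_two`, `sp_le_one_of_even`).
-/

open SimpleGraph

variable {V : Type*}

/-! ### From spanning subgraphs of bounded degree to edge colorings -/

/-- The degree bound `k` on a cover gives `sp G ≤ k`: in a minimal cover every edge `e` has a
private endpoint, lying on no other edge. Each edge is colored by its index among the edges at its
other endpoint; two distinct edges can only meet at a vertex that is the non-private end of both. -/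
theorem sp_le_of_cover {V : Type*} [Finite V] {G H₀ : SimpleGraph V} {k : ℕ} (hle₀ : H₀ ≤ G)
    (hcov₀ : ∀ v, ∃ w, H₀.Adj v w) (hdeg₀ : ∀ v, (H₀.neighborSet v).ncard ≤ k) : sp G ≤ k := by
  classical
  rcases isEmpty_or_nonempty V with hV | hV
  · refine Nat.sInf_le ⟨⊥, fun v => hV.elim v, fun e => ?_, ?_⟩
    · exact hV.elim (e : Sym2 V).out.1
    · exact fun e => hV.elim (e : Sym2 V).out.1
  obtain ⟨H, hHle, hmin⟩ := exists_minimal_le_of_wellFoundedLT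
    (fun H : SimpleGraph V => ∀ v, ∃ w, H.Adj v w) H₀ hcov₀
  have hle : H ≤ G := hHle.trans hle₀
  have hdeg : ∀ v, (H.neighborSet v).ncard ≤ k := fun v =>
    (Set.ncard_le_ncard (fun w hw => hHle hw) (Set.toFinite _)).trans (hdeg₀ v)
  have hpriv : ∀ e ∈ H.edgeSet, ∃ l c, e = s(l, c) ∧ ∀ e' ∈ H.edgeSet, l ∈ e' → e' = e := by
    intro e he
    by_contra! hcon
    have hcov' : ∀ v, ∃ w, (H.deleteEdges {e}).Adj v w := by
      intro v
      obtain ⟨w, hw⟩ := hmin.prop v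
      by_cases hvw : s(v, w) = e
      · obtain ⟨e', he', hv, hne⟩ := hcon v w hvw.symm
        obtain ⟨x, rfl⟩ := hv
        exact ⟨x, by simpa [hne] using he'⟩
      · exact ⟨w, by simpa [hvw] using hw⟩
    have hHd := hmin.le_of_le hcov' (SimpleGraph.deleteEdges_le _)
    have := SimpleGraph.edgeSet_mono hHd he
    simp at this
  choose! l c hlc hpr using hpriv
  cases nonempty_fintype V
  -- an injective numbering of the neighbors of each vertex
  have henum : ∀ v, ∃ g : V → ℕ, (∀ w ∈ H.neighborSet v, g w < k) ∧
      Set.InjOn g (H.neighborSet v) := by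
    intro v
    have : Fintype.card (H.neighborSet v) ≤ Fintype.card (Fin k) := by
      rw [← Nat.card_eq_fintype_card, Fintype.card_fin]
      exact hdeg v
    obtain ⟨g⟩ := Function.Embedding.nonempty_of_card_le this
    refine ⟨fun w => if h : w ∈ H.neighborSet v then (g ⟨w, h⟩).val else 0, ?_, ?_⟩
    · intro w hw
      simp only [hw, dif_pos]
      exact (g ⟨w, hw⟩).isLt
    · intro w hw w' hw' h
      simp only [hw, hw', dif_pos] at h
      have := g.injective (Fin.ext h)
      simpa using this
  choose g hgk hginj using henum
  have hadj : ∀ e ∈ H.edgeSet, l e ∈ H.neighborSet (c e) := by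
    intro e he
    have h := he
    rw [hlc e he] at h
    exact (H.mem_edgeSet.1 h).symm
  apply Nat.sInf_le
  refine ⟨SimpleGraph.toSubgraph H hle, fun v => hmin.prop v, ?_⟩
  have hE : ∀ e : (SimpleGraph.toSubgraph H hle).edgeSet, (e : Sym2 V) ∈ H.edgeSet := by
    rintro ⟨e, he⟩
    induction e with
    | h x y => exact he
  refine ⟨fun e => ⟨g (c e) (l e), hgk _ _ (hadj _ (hE e))⟩, ?_⟩
  rintro ⟨e₁, he₁⟩ ⟨e₂, he₂⟩ hne ⟨v, hv₁, hv₂⟩ heq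
  have h₁ : e₁ ∈ H.edgeSet := hE ⟨e₁, he₁⟩
  have h₂ : e₂ ∈ H.edgeSet := hE ⟨e₂, he₂⟩
  simp only [ne_eq, Subtype.mk.injEq, Fin.mk.injEq] at hne heq hv₁ hv₂
  have hc₁ : v = c e₁ := by
    have := hv₁
    rw [hlc e₁ h₁, Sym2.mem_iff] at this
    rcases this with h | h
    · exact absurd (hpr e₁ h₁ e₂ h₂ (h ▸ hv₂)).symm hne
    · exact h
  have hc₂ : v = c e₂ := by
    have := hv₂
    rw [hlc e₂ h₂, Sym2.mem_iff] at this
    rcases this with h | h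
    · exact absurd (hpr e₂ h₂ e₁ h₁ (h ▸ hv₁)) hne
    · exact h
  have hn₁ := hadj e₁ h₁
  have hn₂ := hadj e₂ h₂
  rw [← hc₁] at hn₁ heq
  rw [← hc₂] at hn₂ heq
  have hl := hginj v hn₁ hn₂ heq
  exact hne (by rw [hlc e₁ h₁, hlc e₂ h₂, ← hc₁, ← hc₂, hl])

/-- The graph with an edge between `v` and `f v` for every selected vertex `v ∈ S`. -/
def selGraph {V : Type*} (f : V → V) (S : Set V) : SimpleGraph V :=
  SimpleGraph.fromRel fun a b => a ∈ S ∧ f a = b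

theorem selGraph_adj {V : Type*} {f : V → V} (hf : ∀ v, v ≠ f v) {S : Set V} {a b : V} :
    (selGraph f S).Adj a b ↔ (a ∈ S ∧ f a = b) ∨ (b ∈ S ∧ f b = a) := by
  rw [selGraph, SimpleGraph.fromRel_adj]
  refine ⟨fun h => h.2, fun h => ⟨?_, h⟩⟩
  rintro rfl
  rcases h with h | h <;> exact hf _ h.2.symm

theorem selGraph_le {V : Type*} {G : SimpleGraph V} {f : V → V} (hf : ∀ v, G.Adj v (f v))
    (S : Set V) : selGraph f S ≤ G := by
  intro a b h
  rcases (selGraph_adj (fun v => (hf v).ne)).1 h with ⟨_, rfl⟩ | ⟨_, rfl⟩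
  · exact hf _
  · exact (hf _).symm

theorem deg_le_maxDeg {V : Type*} [Finite V] (G : SimpleGraph V) (v : V) :
    (G.neighborSet v).ncard ≤ maxDeg G :=
  le_csSup (Set.finite_range _).bddAbove ⟨v, rfl⟩

/-! ### Cyclic sequences of vertices -/

/-- A graph that is not acyclic contains a cycle, given as an injective cyclic sequence of at
least three vertices. -/
theorem exists_cycle {V : Type*} {G : SimpleGraph V} (h : ¬ G.IsAcyclic) :
    ∃ (m : ℕ) (z : Fin (m + 3) → V), Function.Injective z ∧ ∀ i, G.Adj (z i) (z (i + 1)) := by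
  simp only [SimpleGraph.IsAcyclic, not_forall, not_not] at h
  obtain ⟨v, c, hc⟩ := h
  obtain ⟨m, hm⟩ := Nat.exists_eq_add_of_le' hc.three_le_length
  refine ⟨m, fun i => c.getVert i, ?_, ?_⟩
  · intro i j hij
    have := hc.getVert_injOn' (show i.val ≤ c.length - 1 by omega)
      (show j.val ≤ c.length - 1 by omega) hij
    exact Fin.ext this
  · intro i
    have h1 := c.adj_getVert_succ (i := i.val) (by omega)
    induction i using Fin.lastCases with
    | last => simpa [← hm] using h1
    | cast j => simpa using h1

theorem fin_add_two_ne {m : ℕ} (i : Fin (m + 3)) : i + 1 + 1 ≠ i := by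
  intro h
  have h2 : (1 : Fin (m + 3)) + 1 = 0 := by simpa [add_assoc] using h
  have := congrArg Fin.val h2
  simp [Fin.val_add] at this
  rw [Nat.mod_eq_of_lt (by omega)] at this
  omega

/-! ### Maximum degree at least three -/

theorem sp_lt_of_cycle {V : Type*} [Finite V] {G : SimpleGraph V} (hconn : G.Connected)
    (hΔ : 3 ≤ maxDeg G) {m : ℕ} {z : Fin (m + 3) → V} (hz : Function.Injective z)
    (hadj : ∀ i, G.Adj (z i) (z (i + 1))) : sp G < maxDeg G := by
  classical
  set C := Set.range z with hC
  set d : V → ℕ := fun v => G.dist v (z 0) with hd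
  -- `f` is the successor on `C`, and a step towards the root `z 0` off `C`
  have hf : ∀ v, ∃ w, G.Adj v w ∧ (∀ i, v = z i → w = z (i + 1)) ∧ (v ∉ C → d w < d v) := by
    intro v
    by_cases hv : v ∈ C
    · obtain ⟨i, rfl⟩ := hv
      refine ⟨z (i + 1), hadj i, fun j hj => by rw [hz hj], fun h => absurd ⟨i, rfl⟩ h⟩
    · obtain ⟨p, hp⟩ := hconn.exists_walk_length_eq_dist v (z 0)
      cases p with
      | nil => exact absurd ⟨0, rfl⟩ hv
      | @cons _ w _ h q =>
        refine ⟨w, h, fun i hi => absurd ⟨i, hi.symm⟩ hv, fun _ => ?_⟩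
        have := SimpleGraph.dist_le q
        simp only [SimpleGraph.Walk.length_cons] at hp
        simp only [hd]
        omega
  choose f hfadj hfz hfd using hf
  have hfC : ∀ v ∈ C, f v ∈ C := by
    rintro _ ⟨i, rfl⟩
    exact ⟨i + 1, (hfz _ i rfl).symm⟩
  have hff : ∀ v, f (f v) ≠ v := by
    intro v h
    by_cases hv : v ∈ C
    · obtain ⟨i, rfl⟩ := hv
      rw [hfz _ i rfl, hfz _ _ rfl] at h
      exact fin_add_two_ne i (hz h)
    · by_cases hv' : f v ∈ C
      · exact hv (h ▸ hfC _ hv')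
      · have h1 := hfd v hv
        have h2 := hfd _ hv'
        rw [h] at h2
        omega
  have hwf : WellFounded fun u v : V => d v < d u := by
    have : IsTrans V fun u v : V => d v < d u := ⟨fun a b c h h' => h'.trans h⟩
    have : Std.Irrefl fun u v : V => d v < d u := ⟨fun a => lt_irrefl _⟩
    exact Finite.wellFounded_of_trans_of_irrefl _
  -- the selection, made from the farthest vertices towards the root
  obtain ⟨S, hS⟩ : ∃ S : Set V, ∀ v, v ∈ S ↔ ∀ u, u ∉ C → f u = v → u ∉ S := by
    let F : (v : V) → ((u : V) → d v < d u → Prop) → Prop := fun v rec =>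
      ∀ u, ∀ hu : u ∉ C, ∀ h : f u = v, ¬ rec u (h ▸ hfd u hu)
    refine ⟨{v | hwf.fix F v}, fun v => ?_⟩
    change hwf.fix F v ↔ _
    rw [hwf.fix_eq]
    rfl
  have hne : ∀ v, v ≠ f v := fun v => (hfadj v).ne
  have hsp : sp G ≤ maxDeg G - 1 := by
    refine sp_le_of_cover (selGraph_le hfadj S) (fun v => ?_) (fun v => ?_)
    · by_cases hv : v ∈ S
      · exact ⟨f v, (selGraph_adj hne).2 (Or.inl ⟨hv, rfl⟩)⟩
      · have := hv
        rw [hS] at this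
        push Not at this
        obtain ⟨u, _, hu, huS⟩ := this
        exact ⟨u, (selGraph_adj hne).2 (Or.inr ⟨huS, hu⟩)⟩
    · by_cases hv : v ∈ S
      · have hsub : ∃ p, (selGraph f S).neighborSet v ⊆ {f v, p} := by
          by_cases hvC : v ∈ C
          · obtain ⟨i, rfl⟩ := hvC
            refine ⟨z (i - 1), fun u hu => ?_⟩
            rcases (selGraph_adj hne).1 hu with ⟨_, h⟩ | ⟨huS, h⟩
            · exact Or.inl h.symm
            · right
              by_cases huC : u ∈ C
              · obtain ⟨j, rfl⟩ := huC
                rw [hfz _ j rfl] at h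
                rw [← hz h]
                simp
              · exact absurd huS ((hS _).1 hv u huC h)
          · refine ⟨v, fun u hu => ?_⟩
            rcases (selGraph_adj hne).1 hu with ⟨_, h⟩ | ⟨huS, h⟩
            · exact Or.inl h.symm
            · by_cases huC : u ∈ C
              · exact absurd (h ▸ hfC u huC) hvC
              · exact absurd huS ((hS _).1 hv u huC h)
        obtain ⟨p, hp⟩ := hsub
        have h1 := Set.ncard_le_ncard hp (Set.toFinite _)
        have h2 := Set.ncard_insert_le (f v) {p}
        rw [Set.ncard_singleton] at h2
        omega
      · have hlt : ((selGraph f S).neighborSet v).ncard < (G.neighborSet v).ncard := by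
          refine Set.ncard_lt_ncard ⟨fun u hu => selGraph_le hfadj S hu, fun hsup => ?_⟩
            (Set.toFinite _)
          rcases (selGraph_adj hne).1 (hsup (hfadj v)) with ⟨h, _⟩ | ⟨_, h⟩
          · exact hv h
          · exact hff v h
        have := deg_le_maxDeg G v
        omega
  omega

/-! ### Maximum degree at most two -/

theorem cycle_neighbors_ne {V : Type*} {m : ℕ} {z : Fin (m + 3) → V}
    (hz : Function.Injective z) (i : Fin (m + 3)) : z (i - 1) ≠ z (i + 1) := by
  intro h
  have h1 := fin_add_two_ne (i - 1)
  rw [sub_add_cancel, hz h] at h1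
  exact h1 rfl

/-- When all degrees are at most two, the cycle is closed under adjacency, hence is all of the
connected graph `G`. -/
theorem cycle_of_deg_le_two {V : Type*} [Finite V] {G : SimpleGraph V} (hconn : G.Connected)
    (hΔ : maxDeg G ≤ 2) {m : ℕ} {z : Fin (m + 3) → V} (hz : Function.Injective z)
    (hadj : ∀ i, G.Adj (z i) (z (i + 1))) :
    Function.Surjective z ∧ ∀ i, G.neighborSet (z i) = {z (i - 1), z (i + 1)} := by
  have hN : ∀ i, G.neighborSet (z i) = {z (i - 1), z (i + 1)} := by
    intro i
    symm
    refine Set.eq_of_subset_of_ncard_le ?_ ?_ (Set.toFinite _)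
    · rintro w (rfl | rfl)
      · have := hadj (i - 1)
        rw [sub_add_cancel] at this
        exact this.symm
      · exact hadj i
    · rw [Set.ncard_pair (cycle_neighbors_ne hz i)]
      exact (deg_le_maxDeg G _).trans hΔ
  refine ⟨fun v => ?_, hN⟩
  obtain ⟨p⟩ := hconn.preconnected v (z 0)
  induction hn : p.length generalizing v with
  | zero => exact ⟨0, (SimpleGraph.Walk.eq_of_length_eq_zero hn).symm⟩
  | succ n ih =>
    cases p with
    | nil => simp at hn
    | @cons _ w _ h q =>
      obtain ⟨i, rfl⟩ := ih w q (by simpa using hn)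
      have : v ∈ G.neighborSet (z i) := h.symm
      rw [hN] at this
      rcases this with h | h
      · exact ⟨_, h.symm⟩
      · exact ⟨_, h.symm⟩

/-- An even cycle through all the vertices yields a perfect matching. -/
theorem sp_le_one_of_even {V : Type*} [Finite V] {G : SimpleGraph V} {m : ℕ}
    {z : Fin (m + 3) → V} (hz : Function.Bijective z)
    (hadj : ∀ i, G.Adj (z i) (z (i + 1))) (hm : Even (m + 3)) : sp G ≤ 1 := by
  let e := Equiv.ofBijective z hz
  have he : ∀ i, e.symm (z i) = i := fun i => e.symm_apply_apply i
  let f : V → V := fun v => z (e.symm v + 1)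
  have hfz : ∀ i, f (z i) = z (i + 1) := fun i => by simp only [f, he]
  have hfadj : ∀ v, G.Adj v (f v) := by
    intro v
    obtain ⟨i, rfl⟩ := hz.2 v
    rw [hfz]
    exact hadj i
  have hne : ∀ v, v ≠ f v := fun v => (hfadj v).ne
  -- the parity of indices alternates all around the cycle, its length being even
  have hpar : ∀ i : Fin (m + 3), Even (i + 1).val ↔ ¬ Even i.val := by
    intro i
    induction i using Fin.lastCases with
    | last =>
      have : ¬ Even (m + 2) := by
        rw [show m + 3 = (m + 2) + 1 from rfl, Nat.even_add_one] at hm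
        exact hm
      simp [this]
    | cast j => simp [Nat.even_add_one]
  let S : Set V := {v | Even (e.symm v).val}
  have hSz : ∀ i, z i ∈ S ↔ Even i.val := fun i => by simp only [S, Set.mem_ofPred_eq, he]
  refine sp_le_of_cover (selGraph_le hfadj S) (fun v => ?_) (fun v => ?_)
  · obtain ⟨i, rfl⟩ := hz.2 v
    by_cases hi : Even i.val
    · exact ⟨f (z i), (selGraph_adj hne).2 (Or.inl ⟨(hSz i).2 hi, rfl⟩)⟩
    · refine ⟨z (i - 1), (selGraph_adj hne).2 (Or.inr ⟨(hSz _).2 ?_, ?_⟩)⟩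
      · by_contra h
        have := (hpar (i - 1)).2 h
        rw [sub_add_cancel] at this
        exact hi this
      · rw [hfz, sub_add_cancel]
  · rw [Set.ncard_le_one_iff (Set.toFinite _)]
    intro a b ha hb
    rcases (selGraph_adj hne).1 ha with ⟨hv, h⟩ | ⟨hv, h⟩ <;>
      rcases (selGraph_adj hne).1 hb with ⟨hv', h'⟩ | ⟨hv', h'⟩
    · exact h.symm.trans h'
    · obtain ⟨j, rfl⟩ := hz.2 b
      rw [← h', hfz, hSz, hpar] at hv
      exact absurd ((hSz j).1 hv') hv
    · obtain ⟨j, rfl⟩ := hz.2 a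
      rw [← h, hfz, hSz, hpar] at hv'
      exact absurd ((hSz j).1 hv) hv'
    · obtain ⟨i, rfl⟩ := hz.2 a
      obtain ⟨j, rfl⟩ := hz.2 b
      rw [← h', hfz, hfz] at h
      rw [add_right_cancel (hz.1 h)]

/-- If `G` is a connected graph without isolated vertices with `sp(G) = Δ(G)`, then `G` is
either an odd cycle or a tree. -/
theorem sp_eq_maxDeg_implies_oddCycle_or_tree {V : Type*} [Fintype V] (G : SimpleGraph V)
    (hconn : G.Connected) (hG : ∀ v : V, ∃ w : V, G.Adj v w)
    (hsp : sp G = maxDeg G) :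
    (∃ n : ℕ, Odd n ∧ 3 ≤ n ∧ Nonempty (G ≃g SimpleGraph.cycleGraph n)) ∨ G.IsTree := by
  by_cases hac : G.IsAcyclic
  · exact Or.inr ⟨hconn, hac⟩
  left
  obtain ⟨m, z, hz, hadj⟩ := exists_cycle hac
  by_cases hΔ : 3 ≤ maxDeg G
  · exact absurd hsp (sp_lt_of_cycle hconn hΔ hz hadj).ne
  obtain ⟨hsurj, hN⟩ := cycle_of_deg_le_two hconn (by omega) hz hadj
  refine ⟨m + 3, ?_, by omega, ?_⟩
  · by_contra hodd
    have h1 := sp_le_one_of_even ⟨hz, hsurj⟩ hadj (Nat.not_odd_iff_even.1 hodd)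
    have h2 := deg_le_maxDeg G (z 0)
    rw [hN, Set.ncard_pair (cycle_neighbors_ne hz 0)] at h2
    omega
  · refine ⟨SimpleGraph.Iso.symm ⟨Equiv.ofBijective z ⟨hz, hsurj⟩, ?_⟩⟩
    intro i j
    have h1 : G.Adj (z i) (z j) ↔ z j ∈ ({z (i - 1), z (i + 1)} : Set V) := by
      rw [← hN i]
      rfl
    have h2 : (SimpleGraph.cycleGraph (m + 3)).Adj i j ↔
        j ∈ ({i - 1, i + 1} : Set (Fin (m + 3))) := by
      rw [← SimpleGraph.cycleGraph_neighborSet]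
      rfl
    change G.Adj (z i) (z j) ↔ _
    rw [h1, h2]
    simp [hz.eq_iff]
end

section
/- Let T be a tree with at least 3 vertices, and let v be a vertex of T with d_T(v) < Δ(T). Then there exists a (Δ(T)−1)-edge-colorable subgraph H of T such that either H covers every vertex of T, or the set of vertices of T not covered by H is exactly {v}. -/
/-!
Root the tree `T` at `v`. Deciding from the leaves upwards, put the edge from a vertex `u ≠ v` to its
parent into `H` exactly when no edge from `u` to one of its children was put into `H`. Then every
`u ≠ v` is covered, either by its parent edge or by an edge to a child. Moreover `H` is a disjoint
union of stars: if the parent edge of `u` is in `H`, it is the only edge of `H` at `u`. Two edges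
of `H` sharing a vertex therefore join two distinct children to the same parent, so it suffices to
colour, at each vertex, the edges to its children injectively. Every vertex has at most `Δ(T) - 1`
children: a vertex other than `v` loses its parent among its at most `Δ(T)` neighbours, and `v`
has degree less than `Δ(T)` by hypothesis.
-/

open SimpleGraph

variable {V : Type*}

/-- `IsChild T v w p`: in the tree `T` rooted at `v`, the vertex `w` is a child of `p`. This is
encoded by distances from the root. -/
def IsChild {V : Type*} (T : SimpleGraph V) (v w p : V) : Prop :=
  T.Adj w p ∧ T.dist v w = T.dist v p + 1

lemma IsChild.parent_unique {V : Type*} {T : SimpleGraph V} (hT : T.IsTree) {v w p p' : V}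
    (h : IsChild T v w p) (h' : IsChild T v w p') : p = p' := by
  obtain ⟨q, hq⟩ := hT.connected.exists_walk_length_eq_dist v p
  obtain ⟨q', hq'⟩ := hT.connected.exists_walk_length_eq_dist v p'
  have h1 : (q.concat h.1.symm).IsPath :=
    Walk.isPath_of_length_eq_dist _ (by rw [Walk.length_concat, hq, h.2])
  have h2 : (q'.concat h'.1.symm).IsPath :=
    Walk.isPath_of_length_eq_dist _ (by rw [Walk.length_concat, hq', h'.2])
  have h3 := (hT.existsUnique_path v w).unique h1 h2
  have h4 := congrArg Walk.penultimate h3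
  simpa using h4

lemma exists_parent {V : Type*} {T : SimpleGraph V} (hT : T.IsTree) {v u : V} (hu : u ≠ v) :
    ∃ p, IsChild T v u p := by
  obtain ⟨q, hq⟩ := hT.connected.exists_walk_length_eq_dist v u
  have hn : ¬ q.Nil := fun h => hu h.eq.symm
  have hadj := q.adj_penultimate hn
  refine ⟨q.penultimate, hadj.symm, ?_⟩
  have h1 := T.dist_le q.dropLast
  have h2 : q.dropLast.length + 1 = q.length := by
    have := Walk.length_concat q.dropLast hadj
    rw [Walk.concat_dropLast] at this
    exact this.symm
  have h3 := hT.dist_eq_dist_add_one_of_adj v hadj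
  omega

lemma ncard_neighborSet_le_maxDeg {V : Type*} [Finite V] (T : SimpleGraph V) (u : V) :
    (T.neighborSet u).ncard ≤ maxDeg T :=
  le_csSup (Set.finite_range _).bddAbove ⟨u, rfl⟩

lemma ncard_children_le {V : Type*} [Finite V] {T : SimpleGraph V} (hT : T.IsTree) {v : V}
    (hv : (T.neighborSet v).ncard < maxDeg T) (p : V) :
    {w | IsChild T v w p}.ncard ≤ maxDeg T - 1 := by
  have hsub : {w | IsChild T v w p} ⊆ T.neighborSet p := fun w hw => hw.1.symm
  by_cases hp : p = v
  · subst hp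
    have := Set.ncard_le_ncard hsub
    omega
  · obtain ⟨r, hr⟩ := exists_parent hT hp
    have hlt : {w | IsChild T v w p}.ncard < (T.neighborSet p).ncard := by
      refine Set.ncard_lt_ncard ⟨hsub, fun h => ?_⟩
      have h1 : IsChild T v r p := h hr.1
      have := h1.2
      have := hr.2
      omega
    have := ncard_neighborSet_le_maxDeg T p
    omega

/-- The bottom-up choice: a set `X` of vertices (those to be joined to their parents) such that a
vertex lies in `X` exactly when none of its children does. -/
lemma exists_selection {V : Type*} [Finite V] (T : SimpleGraph V) (v : V) :
    ∃ X : V → Prop, ∀ u, X u ↔ ∀ w, IsChild T v w u → ¬ X w := by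
  have wf : WellFounded (fun w u => IsChild T v w u) := by
    let r : V → V → Prop := fun w u => T.dist v u < T.dist v w
    have : IsTrans V r := ⟨fun a b c h1 h2 => lt_trans (b := T.dist v b) h2 h1⟩
    have : Std.Irrefl r := ⟨fun a h => lt_irrefl _ h⟩
    refine Subrelation.wf (r := r) ?_ (Finite.wellFounded_of_trans_of_irrefl r)
    intro a b h
    have := h.2
    show T.dist v b < T.dist v a
    omega
  refine ⟨wf.fix fun u ih => ∀ w (h : IsChild T v w u), ¬ ih w h, fun u => ?_⟩
  rw [wf.fix_eq]

/-- On a finite set with at most `k` elements there is an injective labelling by `0, …, k - 1`. -/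
lemma exists_labelling {V : Type*} [Finite V] (S : Set V) {k : ℕ} (h : S.ncard ≤ k) :
    ∃ g : V → ℕ, Set.InjOn g S ∧ ∀ w ∈ S, g w < k := by
  classical
  let e := Finite.equivFin S
  refine ⟨fun w => if hw : w ∈ S then (e ⟨w, hw⟩ : ℕ) else 0, ?_, ?_⟩
  · intro a ha b hb hab
    simp only [ha, hb, dif_pos] at hab
    simpa using e.injective (Fin.ext hab)
  · intro w hw
    simp only [hw, dif_pos]
    exact lt_of_lt_of_le (e ⟨w, hw⟩).2 h

/-- Let `T` be a tree with at least 3 vertices and `v` a vertex of degree less than `Δ(T)`.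
Then there is a `(Δ(T) - 1)`-edge-colorable subgraph `H` of `T` covering every vertex, or
missing exactly the vertex `v`. -/
theorem tree_deltaMinusOne_colorable_subgraph {V : Type*} [Fintype V] (T : SimpleGraph V)
    (hT : T.IsTree) (hcard : 3 ≤ Fintype.card V) (v : V)
    (hv : (T.neighborSet v).ncard < maxDeg T) :
    ∃ H : T.Subgraph, EdgeColorable H (maxDeg T - 1) ∧
      (SpanningSub H ∨ {x : V | ¬ ∃ w : V, H.Adj x w} = {v}) := by
  obtain ⟨X, hX⟩ := exists_selection T v
  choose g hginj hglt using fun p => exists_labelling _ (ncard_children_le hT hv p)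
  let H : T.Subgraph :=
    { verts := Set.univ
      Adj := fun a b => (IsChild T v a b ∧ X a) ∨ (IsChild T v b a ∧ X b)
      adj_sub := by
        rintro a b (h | h)
        · exact h.1.1
        · exact h.1.1.symm
      edge_vert := fun _ => Set.mem_univ _
      symm := ⟨fun a b h => h.symm⟩ }
  have hcover : ∀ u, u ≠ v → ∃ w, H.Adj u w := by
    intro u hu
    by_cases hx : X u
    · obtain ⟨p, hp⟩ := exists_parent hT hu
      exact ⟨p, Or.inl ⟨hp, hx⟩⟩
    · have h := hx
      rw [hX] at h
      push Not at h
      obtain ⟨w, hw, hxw⟩ := h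
      exact ⟨w, Or.inr ⟨hw, hxw⟩⟩
  refine ⟨H, ?_, ?_⟩
  · have hrep : ∀ e : H.edgeSet, ∃ c p, (e : Sym2 V) = s(c, p) ∧ IsChild T v c p ∧ X c := by
      rintro ⟨e, he⟩
      induction e using Sym2.ind with
      | _ a b =>
        rcases (show H.Adj a b from he) with h | h
        · exact ⟨a, b, rfl, h⟩
        · exact ⟨b, a, Sym2.eq_swap, h⟩
    choose c p hcp hch hXc using hrep
    refine ⟨fun e => ⟨g (p e) (c e), hglt _ _ (hch e)⟩, ?_⟩
    rintro e₁ e₂ hne ⟨x, hx₁, hx₂⟩ heq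
    have hlab : g (p e₁) (c e₁) = g (p e₂) (c e₂) := congrArg Fin.val heq
    apply hne
    apply Subtype.ext
    rw [hcp e₁, Sym2.mem_iff] at hx₁
    rw [hcp e₂, Sym2.mem_iff] at hx₂
    rw [hcp e₁, hcp e₂]
    have h1 := hch e₁
    have h2 := hch e₂
    rcases hx₁ with hx₁ | hx₁ <;> rcases hx₂ with hx₂ | hx₂
    · have hc : c e₁ = c e₂ := hx₁.symm.trans hx₂
      rw [hc] at h1 ⊢
      rw [h1.parent_unique hT h2]
    -- In the two mixed cases the parent end of one edge would be a selected vertex with a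
    -- selected child.
    · have hc : c e₁ = p e₂ := hx₁.symm.trans hx₂
      rw [← hc] at h2
      exact absurd (hXc e₂) ((hX _).1 (hXc e₁) _ h2)
    · have hc : c e₂ = p e₁ := hx₂.symm.trans hx₁
      rw [← hc] at h1
      exact absurd (hXc e₁) ((hX _).1 (hXc e₂) _ h1)
    · have hp : p e₁ = p e₂ := hx₁.symm.trans hx₂
      rw [hp] at h1 hlab ⊢
      rw [hginj _ h1 h2 hlab]
  · by_cases h : ∃ w, H.Adj v w
    · left
      intro u
      by_cases hu : u = v
      · exact hu ▸ h
      · exact hcover u hu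
    · right
      ext u
      simp only [Set.mem_ofPred_eq, Set.mem_singleton_iff]
      constructor
      · intro hu
        by_contra hne
        exact hu (hcover u hne)
      · rintro rfl
        exact h
end

section
/- Let T be a tree with at least 3 edges and let v be a vertex of T. If there exists a (Δ(T)−1)-edge-colorable subgraph H of T that covers every vertex of T except v, then there exists a spanning Δ(T)-edge-colorable subgraph H' of T such that v has degree exactly 1 in H'. -/
/-! Since `T` is connected with at least two vertices, `v` has a neighbor `w`. The edge `vw` is not
in `H`, because `H` misses `v`; adding it to `H` and giving it a color not used on `H` yields a
spanning subgraph with one color more, in which `w` is the only neighbor of `v`. -/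

open SimpleGraph

variable {V : Type*}

/-- Let `T` be a tree with at least 3 edges and `v` a vertex of `T`. If there is a
`(Δ(T) - 1)`-edge-colorable subgraph of `T` covering every vertex except `v`, then there is a
spanning `Δ(T)`-edge-colorable subgraph `H'` of `T` in which `v` has degree exactly 1. -/
theorem tree_spanning_maxDeg_colorable_degree_one {V : Type*} [Fintype V] (T : SimpleGraph V)
    (hT : T.IsTree) (hedges : 3 ≤ T.edgeSet.ncard) (v : V)
    (h : ∃ H : T.Subgraph, EdgeColorable H (maxDeg T - 1) ∧
      (∀ x : V, x ≠ v → ∃ w : V, H.Adj x w) ∧ ¬ ∃ w : V, H.Adj v w) :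
    ∃ H' : T.Subgraph, SpanningSub H' ∧ EdgeColorable H' (maxDeg T) ∧
      (H'.neighborSet v).ncard = 1 := by
  obtain ⟨H, hcol, hcov, hv⟩ := h
  have hne : T.edgeSet.Nonempty := by
    rw [Set.nonempty_iff_ne_empty]
    rintro he
    simp [he] at hedges
  have hnt : Nontrivial V := by
    obtain ⟨e, he⟩ := hne
    induction e using Sym2.ind with
    | _ a b => exact ⟨a, b, T.ne_of_adj he⟩
  obtain ⟨w, hw⟩ := hT.1.preconnected.exists_adj_of_nontrivial v
  have hmax : (T.neighborSet v).ncard ≤ maxDeg T :=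
    le_csSup (Set.finite_range _).bddAbove ⟨v, rfl⟩
  have hpos : 0 < (T.neighborSet v).ncard := (Set.ncard_pos (Set.toFinite _)).2 ⟨w, hw⟩
  obtain ⟨n, hn⟩ : ∃ n, maxDeg T = n + 1 := ⟨maxDeg T - 1, by omega⟩
  rw [hn, Nat.add_sub_cancel] at hcol
  rw [hn]
  obtain ⟨f, hf⟩ := hcol
  have hadj : ∀ a b, (H ⊔ T.subgraphOfAdj hw).Adj a b ↔ H.Adj a b ∨ s(v, w) = s(a, b) :=
    fun a b => by simp [Subgraph.sup_adj]
  refine ⟨H ⊔ T.subgraphOfAdj hw, fun x => ?_, ?_, ?_⟩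
  · by_cases hx : x = v
    · exact ⟨w, (hadj _ _).2 (Or.inr (by rw [hx]))⟩
    · obtain ⟨y, hy⟩ := hcov x hx
      exact ⟨y, (hadj _ _).2 (Or.inl hy)⟩
  · classical
    have hnew : ∀ e : (H ⊔ T.subgraphOfAdj hw).edgeSet, (e : Sym2 V) ∉ H.edgeSet →
        (e : Sym2 V) = s(v, w) := by
      rintro ⟨e, he⟩ hH
      induction e using Sym2.ind with
      | _ a b => exact (((hadj a b).1 he).resolve_left hH).symm
    refine ⟨fun e => if h : (e : Sym2 V) ∈ H.edgeSet then (f ⟨e, h⟩).castSucc else Fin.last n, ?_⟩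
    intro e₁ e₂ hne12 hcommon
    by_cases h₁ : (e₁ : Sym2 V) ∈ H.edgeSet <;> by_cases h₂ : (e₂ : Sym2 V) ∈ H.edgeSet
    · simp only [h₁, h₂, dite_true]
      intro h
      exact hf ⟨e₁, h₁⟩ ⟨e₂, h₂⟩ (fun h => hne12 (Subtype.ext (Subtype.mk.inj h)))
        hcommon (Fin.castSucc_injective _ h)
    · simp only [h₁, h₂, dite_true, dite_false]
      exact (Fin.castSucc_lt_last _).ne
    · simp only [h₁, h₂, dite_true, dite_false]
      exact (Fin.castSucc_lt_last _).ne'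
    · exact absurd (Subtype.ext ((hnew e₁ h₁).trans (hnew e₂ h₂).symm)) hne12
  · rw [Set.ncard_eq_one]
    refine ⟨w, Set.ext fun y => ?_⟩
    rw [Subgraph.mem_neighborSet, hadj, Set.mem_singleton_iff]
    constructor
    · rintro (h | h)
      · exact absurd ⟨y, h⟩ hv
      · exact (Sym2.congr_right.1 h).symm
    · rintro rfl
      exact Or.inr rfl
end

section
/- For any almost regular graph G (i.e., a graph with Δ(G) − δ(G) ≤ 1) without isolated vertices, sp(G) ≤ 2. -/
/-!
It suffices to partition `V` into stars of `G` with one or two leaves, since such a star is a union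
of at most two matchings.

Let `d` be the minimum degree, so that `1 ≤ d` and all degrees are at most `d + 1 ≤ 2 * d`. Double
counting the edges between `X` and its neighborhood `N(X)` gives
`d * |X| ≤ (d + 1) * |N(X)| ≤ 2 * d * |N(X)|`, so by Hall's theorem, applied with two copies of
every vertex, there is a map `f : V → V` such that `f v` is adjacent to `v` and every fiber of `f`
has at most two elements (`exists_two_to_one_neighbor`).

Now consider all partitions of `V` into stars with at most two leaves, single vertices being
allowed. Choose one covering as many vertices as possible by nontrivial stars and, among those, one
with as many leaves `x` as possible attached to `f x`. If `v` were a trivial star, then `v` could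
be attached to `f v` unless `f v` is the center of a star with two leaves: when `f v` is itself a
leaf, it is first made the center of a star of its own. In the exceptional case some leaf `a` of
`f v` has `f a ≠ f v`, because `v` is already in the fiber of `f` over `f v`; replacing `a` by `v`
keeps the number of covered vertices and increases the number of leaves attached along `f`. Hence
there is no trivial star (`exists_starPartition_forall_covered`).
-/

open SimpleGraph

variable {V : Type*}

/-- A partition of the vertices of `G` into stars with at most two leaves (possibly none), encoded
by the map `g` sending each vertex to the center of its star. The leaves are the vertices with
`g x ≠ x`. -/
structure StarPartition (G : SimpleGraph V) (g : V → V) : Prop where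
  idem : ∀ x, g (g x) = g x
  adj : ∀ x, g x ≠ x → G.Adj x (g x)
  two : ∀ x y z, g x ≠ x → g y ≠ y → g z ≠ z → g x = g y → g y = g z →
    x = y ∨ y = z ∨ x = z

/-- The vertex `v` lies in a star of `g` that has at least one leaf. -/
def Covered (g : V → V) (v : V) : Prop := g v ≠ v ∨ ∃ w, w ≠ v ∧ g w = v

/-- Hall's theorem with two copies of every vertex. -/
lemma exists_two_to_one_neighbor [Fintype V] (G : SimpleGraph V) (d : ℕ) (hd : 1 ≤ d)
    (hmin : ∀ v, d ≤ (G.neighborSet v).ncard) (hmax : ∀ v, (G.neighborSet v).ncard ≤ d + 1) :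
    ∃ f : V → V, (∀ v, G.Adj v (f v)) ∧
      ∀ x y z, f x = f y → f y = f z → x = y ∨ y = z ∨ x = z := by
  classical
  have hcard : ∀ v, (G.neighborSet v).ncard = (G.neighborFinset v).card := fun v => by
    rw [Set.ncard_eq_toFinset_card']; rfl
  have hall : ∀ X : Finset V, X.card ≤
      (X.biUnion fun v => G.neighborFinset v ×ˢ (Finset.univ : Finset Bool)).card := by
    intro X
    set Y := X.biUnion fun v => G.neighborFinset v with hY
    have h1 : (X.biUnion fun v => G.neighborFinset v ×ˢ (Finset.univ : Finset Bool)) =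
        Y ×ˢ (Finset.univ : Finset Bool) := by
      ext ⟨a, b⟩; simp [hY]
    have h2 : X.card * d ≤ Y.card * (d + 1) := by
      apply Finset.card_mul_le_card_mul G.Adj
      · intro a ha
        refine ((hcard a) ▸ hmin a).trans (Finset.card_le_card ?_)
        intro b hb
        simp only [Finset.mem_bipartiteAbove, hY, Finset.mem_biUnion]
        exact ⟨⟨a, ha, hb⟩, by simpa using hb⟩
      · intro b _
        refine (Finset.card_le_card ?_).trans ((hcard b) ▸ hmax b)
        intro a ha
        simpa using ((Finset.mem_bipartiteBelow _).1 ha).2.symm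
    rw [h1, Finset.card_product]
    simp only [Finset.card_univ, Fintype.card_bool]
    have h3 : X.card * d ≤ Y.card * 2 * d := by nlinarith
    exact Nat.le_of_mul_le_mul_right h3 hd
  obtain ⟨F, hinj, hF⟩ :=
    (Finset.all_card_le_biUnion_card_iff_exists_injective _).1 hall
  refine ⟨fun v => (F v).1, fun v => ?_, fun x y z hxy hyz => ?_⟩
  · have := hF v
    simp only [Finset.mem_product, SimpleGraph.mem_neighborFinset] at this
    exact this.1
  · -- two of the three vertices use the same copy of their common image
    have key : ∀ a b, (F a).1 = (F b).1 → (F a).2 = (F b).2 → a = b :=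
      fun a b h h' => hinj (Prod.ext h h')
    by_cases h1 : (F x).2 = (F y).2
    · exact Or.inl (key _ _ hxy h1)
    by_cases h2 : (F y).2 = (F z).2
    · exact Or.inr (Or.inl (key _ _ hyz h2))
    refine Or.inr (Or.inr (key _ _ (hxy.trans hyz) ?_))
    revert h1 h2
    cases (F x).2 <;> cases (F y).2 <;> cases (F z).2 <;> simp

/-- The exchange step: a star partition with an uncovered vertex can be improved, either by
covering strictly more vertices, or by covering `v` instead of a single vertex `a` while attaching
one more leaf along `f`. -/
lemma StarPartition.improve {G : SimpleGraph V} {f g : V → V} (hf : ∀ v, G.Adj v (f v))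
    (hf2 : ∀ x y z, f x = f y → f y = f z → x = y ∨ y = z ∨ x = z)
    (hg : StarPartition G g) {v : V} (hv : ¬ Covered g v) :
    ∃ g', StarPartition G g' ∧ Covered g' v ∧
      ((∀ x, Covered g x → Covered g' x) ∨
       ((∃ a, ∀ x, x ≠ a → Covered g x → Covered g' x) ∧
        (∀ x, g x = f x → g' x = f x) ∧ g v ≠ f v ∧ g' v = f v)) := by
  classical
  obtain ⟨hid, hadj, htwo⟩ := hg
  simp only [Covered, not_or, not_exists, not_and, not_not] at hv
  obtain ⟨hvv, hv⟩ := hv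
  have huv : f v ≠ v := (hf v).ne'
  have hfv := hf v
  by_cases hu : g (f v) = f v
  · by_cases hfew : ∀ x y, g x = f v → g y = f v → x ≠ f v → y ≠ f v → x = y
    · refine ⟨fun x => if x = v then f v else g x, ⟨?_, ?_, ?_⟩, ?_, Or.inl ?_⟩
      · grind
      · grind
      · grind
      · simp [Covered, huv]
      · intro x hx
        simp only [Covered] at hx ⊢
        grind
    · push Not at hfew
      -- `f v` has two leaves, one of which is not attached along `f`
      obtain ⟨a, ha, hau, hfa⟩ : ∃ a, g a = f v ∧ a ≠ f v ∧ f a ≠ f v := by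
        obtain ⟨x, y, hx, hy, hxu, hyu, hxy⟩ := hfew
        by_cases h : f x = f v
        · refine ⟨y, hy, hyu, fun h' => ?_⟩
          rcases hf2 x y v (h.trans h'.symm) h' with h | h | h <;> grind
        · exact ⟨x, hx, hxu, h⟩
      have hav : a ≠ v := by grind
      refine ⟨fun x => if x = v then f v else if x = a then a else g x,
        ⟨?_, ?_, ?_⟩, ?_, Or.inr ⟨⟨a, ?_⟩, ?_, ?_, ?_⟩⟩
      · grind
      · grind
      · intro x y z hx hy hz hxy hyz
        have h1 := htwo x y z
        have h2 := htwo a x y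
        have h3 := htwo a y z
        have h4 := htwo a x z
        grind
      · simp [Covered, huv]
      · intro x hxa hx
        simp only [Covered] at hx ⊢
        grind
      · grind
      · grind
      · grind
  · by_cases hb : ∃ b, b ≠ f v ∧ b ≠ g (f v) ∧ g b = g (f v)
    · obtain ⟨b, hb1, hb2, hb3⟩ := hb
      refine ⟨fun x => if x = v then f v else if x = f v then f v else g x,
        ⟨?_, ?_, ?_⟩, ?_, Or.inl ?_⟩
      · grind
      · grind
      · grind
      · simp [Covered, huv]
      · intro x hx
        simp only [Covered] at hx ⊢
        grind
    · -- the star of `f v` is a single edge, whose center can be moved to `f v`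
      push Not at hb
      have hadj' := hadj _ hu
      refine ⟨fun x => if x = v then f v else if x = f v then f v else
        if x = g (f v) then f v else g x, ⟨?_, ?_, ?_⟩, ?_, Or.inl ?_⟩
      · grind
      · intro x
        have := hadj'.symm
        grind
      · grind
      · simp [Covered, huv]
      · intro x hx
        simp only [Covered] at hx ⊢
        grind

lemma exists_starPartition_forall_covered [Fintype V] {G : SimpleGraph V} {f : V → V}
    (hf : ∀ v, G.Adj v (f v))
    (hf2 : ∀ x y z, f x = f y → f y = f z → x = y ∨ y = z ∨ x = z) :
    ∃ g, StarPartition G g ∧ ∀ v, Covered g v := by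
  classical
  let C : (V → V) → Finset V := fun g => Finset.univ.filter (Covered g)
  let A : (V → V) → Finset V := fun g => Finset.univ.filter fun x => g x = f x
  -- the weight orders pairs `(#C, #A)` lexicographically, as `#A ≤ #V`
  let Φ : (V → V) → ℕ := fun g => (Fintype.card V + 1) * (C g).card + (A g).card
  obtain ⟨g, hg, hgmax⟩ := Finset.exists_max_image
    (Finset.univ.filter fun g : V → V => StarPartition G g) Φ
    ⟨id, by simpa using ⟨fun _ => rfl, fun x h => (h rfl).elim, fun x _ _ h => (h rfl).elim⟩⟩
  simp only [Finset.mem_filter, Finset.mem_univ, true_and] at hg hgmax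
  refine ⟨g, hg, fun v => ?_⟩
  by_contra hv
  obtain ⟨g', hg', hv', h⟩ := hg.improve hf hf2 hv
  have hle := hgmax g' hg'
  have hvC : v ∉ C g := by simpa [C] using hv
  have hA : (A g).card ≤ Fintype.card V := Finset.card_le_univ _
  rcases h with h | ⟨⟨a, ha⟩, hAA, hv1, hv2⟩
  · have h1 : (C g).card + 1 ≤ (C g').card := by
      rw [← Finset.card_insert_of_notMem hvC]
      apply Finset.card_le_card
      intro x hx
      simp only [C, Finset.mem_insert, Finset.mem_filter, Finset.mem_univ, true_and] at hx ⊢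
      rcases hx with rfl | hx
      exacts [hv', h x hx]
    simp only [Φ] at hle
    nlinarith
  · have h1 : (C g).card ≤ (C g').card := by
      have h2 : (insert v ((C g).erase a)).card ≤ (C g').card := by
        apply Finset.card_le_card
        intro x hx
        simp only [C, Finset.mem_insert, Finset.mem_erase, Finset.mem_filter, Finset.mem_univ,
          true_and] at hx ⊢
        rcases hx with rfl | hx
        exacts [hv', ha x hx.1 hx.2]
      rw [Finset.card_insert_of_notMem fun h => hvC (Finset.mem_of_mem_erase h)] at h2
      have := Finset.pred_card_le_card_erase (s := C g) (a := a)
      omega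
    have h3 : (A g).card < (A g').card := by
      apply Finset.card_lt_card
      refine ⟨fun x hx => ?_, fun hsub => ?_⟩
      · simp only [A, Finset.mem_filter, Finset.mem_univ, true_and] at hx ⊢
        exact hAA x hx
      · have : v ∈ A g := hsub (by simpa [A] using hv2)
        exact hv1 (by simpa [A] using this)
    simp only [Φ] at hle
    nlinarith

/-- Coloring the at most two leaves of each star differently, the edges from leaves to centers form
a `2`-edge-colorable subgraph. -/
lemma StarPartition.exists_subgraph [Fintype V] {G : SimpleGraph V} {g : V → V}
    (hg : StarPartition G g) (hc : ∀ v, Covered g v) :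
    ∃ H : G.Subgraph, SpanningSub H ∧ EdgeColorable H 2 := by
  classical
  let H : G.Subgraph :=
    { verts := Set.univ
      Adj := fun x y => (g x ≠ x ∧ g x = y) ∨ (g y ≠ y ∧ g y = x)
      adj_sub := by
        rintro x y (⟨h, rfl⟩ | ⟨h, rfl⟩)
        exacts [hg.adj _ h, (hg.adj _ h).symm]
      edge_vert := fun _ => Set.mem_univ _
      symm := ⟨fun x y h => h.symm⟩ }
  -- the second leaf of a star, in an arbitrary enumeration of `V`, gets a different color
  let e := Fintype.equivFin V
  let col : V → Fin 2 := fun x => if ∃ y, g y ≠ y ∧ g y = g x ∧ e y < e x then 1 else 0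
  have hcol' : ∀ x y, g x ≠ x → g y ≠ y → g x = g y → e x < e y → col x ≠ col y := by
    intro x y hx hy hxy hlt
    have h1 : col y = 1 := if_pos ⟨x, hx, hxy, hlt⟩
    have h2 : col x = 0 := by
      refine if_neg ?_
      rintro ⟨z, hz, hzx, hzlt⟩
      rcases hg.two z x y hz hx hy hzx hxy with rfl | rfl | rfl
      exacts [lt_irrefl _ hzlt, lt_irrefl _ hlt, lt_asymm hlt hzlt]
    rw [h1, h2]; decide
  have hcol : ∀ x y, g x ≠ x → g y ≠ y → g x = g y → col x = col y → x = y := by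
    intro x y hx hy hxy hc
    rcases lt_trichotomy (e x) (e y) with h | h | h
    · exact (hcol' x y hx hy hxy h hc).elim
    · exact e.injective h
    · exact (hcol' y x hy hx hxy.symm h hc.symm).elim
  have hleaf : ∀ E : H.edgeSet, ∃ x, g x ≠ x ∧ (E : Sym2 V) = s(x, g x) := by
    rintro ⟨E, hE⟩
    induction E with
    | _ x y =>
      have hE' : (g x ≠ x ∧ g x = y) ∨ (g y ≠ y ∧ g y = x) := hE
      rcases hE' with ⟨h, h'⟩ | ⟨h, h'⟩
      · exact ⟨x, h, by rw [h']⟩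
      · exact ⟨y, h, by rw [h']; exact Sym2.eq_swap⟩
  choose L hL hLE using hleaf
  refine ⟨H, fun v => ?_, fun E => col (L E), ?_⟩
  · rcases hc v with h | ⟨w, hw, h⟩
    exacts [⟨g v, Or.inl ⟨h, rfl⟩⟩, ⟨w, Or.inr ⟨h ▸ hw.symm, h⟩⟩]
  · rintro E₁ E₂ hne ⟨v, h1, h2⟩ heq
    rw [hLE, Sym2.mem_iff] at h1 h2
    have hx1 := hL E₁
    have hx2 := hL E₂
    have hid1 := hg.idem (L E₁)
    have hid2 := hg.idem (L E₂)
    have hsame : L E₁ = L E₂ := by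
      rcases h1 with h1 | h1 <;> rcases h2 with h2 | h2
      · exact h1.symm.trans h2
      · rw [← h2, h1] at hid2
        exact (hx1 hid2).elim
      · rw [← h1, h2] at hid1
        exact (hx2 hid1).elim
      · exact hcol _ _ hx1 hx2 (h1.symm.trans h2) heq
    exact hne (Subtype.ext (by rw [hLE E₁, hLE E₂, hsame]))

/-- For any almost regular graph (`Δ(G) - δ(G) ≤ 1`) without isolated vertices, `sp(G) ≤ 2`. -/
theorem almostRegular_sp_le_two {V : Type*} [Fintype V] (G : SimpleGraph V)
    (hG : ∀ v : V, ∃ w : V, G.Adj v w) (halmost : maxDeg G - minDeg G ≤ 1) :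
    sp G ≤ 2 := by
  apply Nat.sInf_le
  -- the truncation to `1` only matters when `V` is empty
  obtain ⟨f, hf, hf2⟩ := exists_two_to_one_neighbor G (max 1 (minDeg G)) (le_max_left _ _)
    (fun v => max_le
      ((Set.ncard_pos (Set.toFinite _)).2 (hG v)) (Nat.sInf_le ⟨v, rfl⟩))
    (fun v => by
      have h : (G.neighborSet v).ncard ≤ maxDeg G :=
        le_csSup (Set.finite_range _).bddAbove ⟨v, rfl⟩
      have := le_max_right 1 (minDeg G)
      omega)
  obtain ⟨g, hg, hc⟩ := exists_starPartition_forall_covered hf hf2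
  exact hg.exists_subgraph hc
end

section
/- For any graph G without isolated vertices, sp(G) ≤ Δ(G) − δ(G) + 2. -/
/-!
A spanning subgraph with the fewest possible edges is a star forest, and a star forest is
edge-colorable with as many colors as its largest star has edges. So it is enough to find a spanning
subgraph of maximum degree at most `Δ - δ + 2`.

Put `c = Δ - δ + 1`. Since `1 ≤ δ ≤ Δ`, we have `Δ ≤ δ * c`. Counting the edges between a set `S`
of vertices and its neighborhood `N(S)` gives `δ |S| ≤ Δ |N(S)| ≤ δ c |N(S)|`, so
`|S| ≤ c |N(S)|`. By Hall's theorem (applied to `c` copies of every vertex) each vertex `v` can pick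
a neighbor `(φ v).1` so that no vertex is picked more than `c` times (`exists_bounded_choice`).
The edges `v (φ v).1` form a spanning subgraph in which every vertex is on at most `c + 1` edges:
the one it picks, and the at most `c` by which it is picked. A minimal spanning subgraph of this
graph is a star forest (`exists_starForest_le`); color the edge from a center `v` to a leaf `w` by
the copy of `v` which `w` picked, or by one extra color if `w` did not pick `v` (`pickColor`).
-/

open SimpleGraph

variable {V : Type*}

lemma card_neighborSet_le_maxDeg {V : Type*} [Fintype V] (G : SimpleGraph V) (v : V) :
    (G.neighborSet v).ncard ≤ maxDeg G :=
  le_csSup (Set.finite_range _).bddAbove ⟨v, rfl⟩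

lemma minDeg_le_card_neighborSet {V : Type*} (G : SimpleGraph V) (v : V) :
    minDeg G ≤ (G.neighborSet v).ncard :=
  Nat.sInf_le ⟨v, rfl⟩

lemma minDeg_pos {V : Type*} [Fintype V] [Nonempty V] (G : SimpleGraph V)
    (hG : ∀ v : V, ∃ w : V, G.Adj v w) : 0 < minDeg G := by
  obtain ⟨v, hv⟩ := Nat.sInf_mem (Set.range_nonempty fun v : V => (G.neighborSet v).ncard)
  unfold minDeg
  rw [← hv]
  obtain ⟨w, hw⟩ := hG v
  exact (Set.ncard_pos (Set.toFinite _)).2 ⟨w, hw⟩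

/-- Every vertex can pick a numbered copy of one of its neighbors, where each vertex has
`Δ - δ + 1` copies and each copy is picked at most once. -/
lemma exists_bounded_choice {V : Type*} [Fintype V] (G : SimpleGraph V)
    (hG : ∀ v : V, ∃ w : V, G.Adj v w) :
    ∃ φ : V → V × Fin (maxDeg G - minDeg G + 1),
      Function.Injective φ ∧ ∀ v, G.Adj v (φ v).1 := by
  classical
  set c := maxDeg G - minDeg G + 1 with hc
  have hHall := (Finset.all_card_le_biUnion_card_iff_exists_injective
    (fun v : V => G.neighborFinset v ×ˢ (Finset.univ : Finset (Fin c)))).1 ?_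
  · obtain ⟨φ, hφ, hmem⟩ := hHall
    refine ⟨φ, hφ, fun v => ?_⟩
    have := hmem v
    simpa using this
  intro S
  rcases S.eq_empty_or_nonempty with rfl | ⟨v₀, -⟩
  · simp
  have : Nonempty V := ⟨v₀⟩
  have hpos := minDeg_pos G hG
  have hle : minDeg G ≤ maxDeg G :=
    (minDeg_le_card_neighborSet G v₀).trans (card_neighborSet_le_maxDeg G v₀)
  have hdeg : ∀ v, (G.neighborSet v).ncard = (G.neighborFinset v).card := fun v => by
    rw [Set.ncard_eq_toFinset_card', SimpleGraph.neighborFinset]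
  have hcount : S.card * minDeg G ≤ (S.biUnion fun v => G.neighborFinset v).card * maxDeg G := by
    apply Finset.card_mul_le_card_mul G.Adj
    · intro v hv
      refine (minDeg_le_card_neighborSet G v).trans ?_
      rw [hdeg]
      apply Finset.card_le_card
      intro w hw
      simp only [Finset.mem_bipartiteAbove, Finset.mem_biUnion]
      exact ⟨⟨v, hv, hw⟩, by simpa using hw⟩
    · intro w _
      refine le_trans ?_ (card_neighborSet_le_maxDeg G w)
      rw [hdeg]
      apply Finset.card_le_card
      intro v hv
      simp only [Finset.mem_bipartiteBelow] at hv
      simpa using hv.2.symm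
  have hunion : (S.biUnion fun v => G.neighborFinset v ×ˢ (Finset.univ : Finset (Fin c)))
      = (S.biUnion fun v => G.neighborFinset v) ×ˢ (Finset.univ : Finset (Fin c)) := by
    ext ⟨a, b⟩
    simp
  rw [hunion, Finset.card_product, Finset.card_univ, Fintype.card_fin]
  -- `δ * (Δ - δ + 1) - Δ = (δ - 1) * (Δ - δ) ≥ 0`
  have hΔ : maxDeg G ≤ c * minDeg G := by
    obtain ⟨d, hd⟩ := Nat.exists_eq_add_of_le hle
    have : c = d + 1 := by omega
    rw [this, hd]
    nlinarith
  refine Nat.le_of_mul_le_mul_right ?_ hpos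
  calc S.card * minDeg G ≤ _ := hcount
    _ ≤ _ := Nat.mul_le_mul_left _ hΔ
    _ = _ := by ring

/-- A graph without isolated vertices contains a spanning star forest: every edge `u v` has an
endpoint all of whose neighbors coincide with the other endpoint. -/
lemma exists_starForest_le {V : Type*} [Fintype V] (F : SimpleGraph V)
    (hF : ∀ v, ∃ w, F.Adj v w) :
    ∃ H ≤ F, (∀ v, ∃ w, H.Adj v w) ∧
      ∀ u v, H.Adj u v → (∀ w, H.Adj u w → w = v) ∨ (∀ w, H.Adj v w → w = u) := by
  classical
  obtain ⟨H, hHF, hmin⟩ := exists_minimal_le_of_wellFoundedLT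
    (fun H : SimpleGraph V => ∀ v, ∃ w, H.Adj v w) F hF
  refine ⟨H, hHF, hmin.prop, fun u v huv => ?_⟩
  -- An edge violating the claim could be deleted without isolating a vertex.
  by_contra! hcon
  obtain ⟨⟨u', hu', hne_u⟩, ⟨v', hv', hne_v⟩⟩ := hcon
  have hspan : ∀ x, ∃ w, (H.deleteEdges {s(u, v)}).Adj x w := by
    intro x
    simp only [SimpleGraph.deleteEdges_adj, Set.mem_singleton_iff]
    have := huv.ne
    by_cases hxu : x = u
    · subst hxu
      exact ⟨u', hu', by rw [Sym2.eq_iff]; grind⟩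
    by_cases hxv : x = v
    · subst hxv
      exact ⟨v', hv', by rw [Sym2.eq_iff]; grind⟩
    obtain ⟨w, hw⟩ := hmin.prop x
    exact ⟨w, hw, by rw [Sym2.eq_iff]; grind⟩
  have := hmin.le_of_le hspan (SimpleGraph.deleteEdges_le _) huv
  simp at this

open Classical in
/-- The color of an edge from a center `v` to a leaf `w`: the number of the copy of `v` that `w`
picked, or the extra color `Fin.last c` if `w` picked another vertex. -/
noncomputable def pickColor {V : Type*} {c : ℕ} (φ : V → V × Fin c) (v w : V) : Fin (c + 1) :=
  if (φ w).1 = v then (φ w).2.castSucc else Fin.last c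

/-- The edges at a fixed vertex `v` receive distinct colors: those by which `v` is picked use
distinct copies of `v`, and only the edge that `v` itself picks can get the extra color. -/
lemma pickColor_inj {V : Type*} {c : ℕ} {φ : V → V × Fin c} (hφ : Function.Injective φ)
    {v a b : V} (ha : (φ v).1 = a ∨ (φ a).1 = v) (hb : (φ v).1 = b ∨ (φ b).1 = v)
    (h : pickColor φ v a = pickColor φ v b) : a = b := by
  unfold pickColor at h
  split_ifs at h with h1 h2 h2
  · exact hφ (Prod.ext (h1.trans h2.symm) (Fin.castSucc_injective _ h))
  · exact absurd h (Fin.castSucc_lt_last _).ne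
  · exact absurd h.symm (Fin.castSucc_lt_last _).ne
  · exact (ha.resolve_right h1).symm.trans (hb.resolve_right h2)

/-- For any graph without isolated vertices, `sp(G) ≤ Δ(G) - δ(G) + 2`. -/
theorem sp_le_maxDeg_sub_minDeg_add_two {V : Type*} [Fintype V] (G : SimpleGraph V)
    (hG : ∀ v : V, ∃ w : V, G.Adj v w) :
    sp G ≤ maxDeg G - minDeg G + 2 := by
  obtain ⟨φ, hφ, hadj⟩ := exists_bounded_choice G hG
  let F : SimpleGraph V :=
    { Adj := fun u v => (φ u).1 = v ∨ (φ v).1 = u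
      symm := ⟨fun _ _ h => h.symm⟩
      loopless := ⟨fun v h => (hadj v).ne' (h.elim id id)⟩ }
  have hFG : F ≤ G := by
    rintro u v (rfl | rfl)
    · exact hadj u
    · exact (hadj v).symm
  obtain ⟨H, hHF, hspan, hstar⟩ := exists_starForest_le F fun v => ⟨(φ v).1, Or.inl rfl⟩
  refine Nat.sInf_le ⟨SimpleGraph.toSubgraph H (hHF.trans hFG), hspan, ?_⟩
  have horient : ∀ e : (SimpleGraph.toSubgraph H (hHF.trans hFG)).edgeSet,
      ∃ p : V × V, (e : Sym2 V) = s(p.1, p.2) ∧ H.Adj p.1 p.2 ∧ ∀ w, H.Adj p.2 w → w = p.1 := by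
    rintro ⟨e, he⟩
    induction e with
    | _ u v =>
      have huv : H.Adj u v := he
      rcases hstar u v huv with h | h
      · exact ⟨(v, u), Sym2.eq_swap, huv.symm, h⟩
      · exact ⟨(u, v), rfl, huv, h⟩
  -- `(p e).1` is the center and `(p e).2` the leaf of the edge `e`.
  choose p hpe hpadj hpleaf using horient
  -- A common vertex of two distinct edges is not the leaf of either of them.
  have hcenter : ∀ (e₁ e₂ : (SimpleGraph.toSubgraph H (hHF.trans hFG)).edgeSet) (v : V),
      e₁ ≠ e₂ → v ∈ (e₁ : Sym2 V) → v ∈ (e₂ : Sym2 V) → v = (p e₁).1 := by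
    intro e₁ e₂ v hne h1 h2
    rw [hpe e₁, Sym2.mem_iff] at h1
    refine h1.resolve_right fun hv => hne (Subtype.ext ?_)
    obtain ⟨w, hw⟩ := h2
    have hvw : H.Adj v w := by
      have := e₂.2
      rw [hw] at this
      exact this
    have hwp := hpleaf e₁ w (hv ▸ hvw)
    rw [hpe e₁, hw, hwp, hv, Sym2.eq_swap]
  refine ⟨fun e => pickColor φ (p e).1 (p e).2, ?_⟩
  rintro e₁ e₂ hne ⟨v, hv1, hv2⟩ heq
  have h1 := hcenter e₁ e₂ v hne hv1 hv2
  have h2 := hcenter e₂ e₁ v hne.symm hv2 hv1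
  have ha : F.Adj v (p e₁).2 := hHF (h1 ▸ hpadj e₁)
  have hb : F.Adj v (p e₂).2 := hHF (h2 ▸ hpadj e₂)
  simp only [← h1, ← h2] at heq
  have hleaf := pickColor_inj hφ ha hb heq
  exact hne (Subtype.ext (by rw [hpe e₁, hpe e₂, ← h1, ← h2, hleaf]))
end

section
/- For any graph G without isolated vertices, sp(G) ≤ |V(G)| − 2·ν(G) + 1, where ν(G) is the number of edges in a maximum matching of G. -/
/-!
Take a maximum matching `M`. It misses exactly `|V| - 2ν(G)` vertices, and each missed vertex `u`
has some neighbor `g u`. The edges of `M` together with the edges `{u, g u}` form a spanning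
subgraph; coloring all of `M` with one color and giving each `{u, g u}` outside `M` a color of its
own uses at most `|V| - 2ν(G) + 1` colors.
-/

open SimpleGraph

variable {V : Type*}

theorem two_mul_ncard_edgeSet_of_isMatching {V : Type*} [Fintype V] {G : SimpleGraph V}
    {M : G.Subgraph} (hM : M.IsMatching) : 2 * M.edgeSet.ncard = M.verts.ncard := by
  classical
  have h := M.spanningCoe.sum_degrees_eq_twice_card_edges
  have hd : ∀ v, M.spanningCoe.degree v = if v ∈ M.verts then 1 else 0 := by
    intro v
    rw [SimpleGraph.Subgraph.degree_spanningCoe]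
    split_ifs with hv
    · exact (SimpleGraph.Subgraph.degree_eq_one_iff_existsUnique_adj).2 (hM hv)
    · exact SimpleGraph.Subgraph.degree_of_notMem_verts hv
  have he : M.edgeSet.ncard = M.spanningCoe.edgeFinset.card := by
    rw [← SimpleGraph.Subgraph.edgeSet_spanningCoe, ← SimpleGraph.coe_edgeFinset,
      Set.ncard_coe_finset]
  rw [he, ← h, Finset.sum_congr rfl (fun v _ => hd v), Finset.sum_boole,
    Set.ncard_eq_toFinset_card']
  simp only [Nat.cast_id]
  congr 1
  ext v
  simp

theorem exists_isMatching_ncard_eq_matchNum {V : Type*} [Fintype V] (G : SimpleGraph V) :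
    ∃ M : G.Subgraph, M.IsMatching ∧ M.edgeSet.ncard = matchNum G := by
  classical
  have hne : {n | ∃ M : G.Subgraph, M.IsMatching ∧ M.edgeSet.ncard = n}.Nonempty :=
    ⟨_, ⊥, fun v hv => hv.elim, rfl⟩
  refine Nat.sSup_mem hne ⟨Fintype.card V, ?_⟩
  rintro n ⟨M, hM, rfl⟩
  have h := two_mul_ncard_edgeSet_of_isMatching hM
  have h2 := Set.ncard_le_card M.verts
  rw [Nat.card_eq_fintype_card] at h2
  omega

/-- For any graph without isolated vertices, `sp(G) ≤ |V(G)| - 2ν(G) + 1`. -/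
theorem sp_le_card_sub_two_mul_nu_add_one {V : Type*} [Fintype V] (G : SimpleGraph V)
    (hG : ∀ v : V, ∃ w : V, G.Adj v w) :
    sp G ≤ Fintype.card V - 2 * matchNum G + 1 := by
  classical
  obtain ⟨M, hM, hcard⟩ := exists_isMatching_ncard_eq_matchNum G
  choose g hg using hG
  have hU : Fintype.card ↥(M.vertsᶜ) = Fintype.card V - 2 * matchNum G := by
    rw [← hcard, two_mul_ncard_edgeSet_of_isMatching hM, Fintype.card_compl_set,
      Set.ncard_eq_toFinset_card', Set.toFinset_card]
  let c : ↥(M.vertsᶜ) ≃ Fin (Fintype.card V - 2 * matchNum G) := Fintype.equivFinOfCardEq hU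
  -- The matching together with one edge at every unmatched vertex.
  let H : G.Subgraph :=
    { verts := Set.univ
      Adj := fun a b => M.Adj a b ∨ ∃ u : ↥(M.vertsᶜ), s(a, b) = s(u.1, g u.1)
      adj_sub := by
        rintro a b (h | ⟨u, hu⟩)
        · exact h.adj_sub
        · rw [← SimpleGraph.mem_edgeSet, hu]
          exact hg u.1
      edge_vert := fun _ => Set.mem_univ _
      symm := by
        constructor
        rintro a b (h | ⟨u, hu⟩)
        · exact Or.inl h.symm
        · exact Or.inr ⟨u, by rw [Sym2.eq_swap, hu]⟩ }
  have hedge : ∀ e : H.edgeSet, (e : Sym2 V) ∉ M.edgeSet →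
      ∃ u : ↥(M.vertsᶜ), (e : Sym2 V) = s(u.1, g u.1) := by
    rintro ⟨e, he⟩ hne
    induction e using Sym2.ind with
    | _ a b => exact Or.resolve_left he hne
  choose r hr using hedge
  refine Nat.sInf_le ⟨H, fun v => ?_, ?_⟩
  · by_cases hv : v ∈ M.verts
    · obtain ⟨w, hw, -⟩ := hM hv
      exact ⟨w, Or.inl hw⟩
    · exact ⟨g v, Or.inr ⟨⟨v, hv⟩, rfl⟩⟩
  · refine ⟨fun e => if h : (e : Sym2 V) ∈ M.edgeSet then 0 else (c (r e h)).succ, ?_⟩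
    rintro e₁ e₂ hne ⟨v, hv₁, hv₂⟩ heq
    apply hne
    apply Subtype.ext
    by_cases h₁ : (e₁ : Sym2 V) ∈ M.edgeSet <;> by_cases h₂ : (e₂ : Sym2 V) ∈ M.edgeSet
    · -- Two matching edges with a common end coincide.
      obtain ⟨a, ha⟩ := Sym2.mem_iff_exists.1 hv₁
      obtain ⟨b, hb⟩ := Sym2.mem_iff_exists.1 hv₂
      rw [ha, SimpleGraph.Subgraph.mem_edgeSet] at h₁
      rw [hb, SimpleGraph.Subgraph.mem_edgeSet] at h₂
      rw [ha, hb, hM.eq_of_adj_left h₁ h₂]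
    · simp only [h₁, h₂, dite_true, dite_false] at heq
      exact absurd heq.symm (Fin.succ_ne_zero _)
    · simp only [h₁, h₂, dite_true, dite_false] at heq
      exact absurd heq (Fin.succ_ne_zero _)
    · simp only [h₁, h₂, dite_false] at heq
      rw [hr e₁ h₁, hr e₂ h₂, c.injective (Fin.succ_injective _ heq)]
end

section
/- For any graph G without isolated vertices, sp(G) ≤ 1 + ⌊Δ(G)/δ(G)⌋. -/
/-!
Write `Δ`, `δ` for the extreme degrees and `k = 1 + ⌊Δ/δ⌋`, so that `k ≥ 2` and `Δ ≤ k δ`.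

Double counting the edges between a set `S` of vertices and its neighborhood `N(S)` gives
`δ |S| ≤ Δ |N(S)|`, hence `|S| ≤ k |N(S)|`. By Hall's theorem there are a map `f : V → V` with
`f v` adjacent to `v`, and a color `col v ∈ {0, …, k - 1}` for each `v`, such that
`v ↦ (f v, col v)` is injective (`exists_pointer`).

It remains to pick a set `S` of vertices such that the edges `{v, f v}` with `v ∈ S` cover all
vertices and are properly `k`-colored (`exists_cover`). As long as there is a vertex `v` that is
not the `f`-image of a remaining vertex, put `v` into `S`, with color `col v`, and discard `v` and
`f v`. Two edges chosen this way meet only if they have the same `f`-value, and then their colors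
differ. When the process stops, `f` permutes the remaining vertices. There, an inclusion-minimal
cover by edges `{v, f v}` contains no three consecutive edges, so two colors suffice.
-/

open SimpleGraph

variable {V : Type*}

/-- Hall's theorem applied to the sets `N(v) × {0, …, k - 1}`. -/
lemma exists_pointer {V : Type*} [Fintype V] (G : SimpleGraph V) {d D k : ℕ} (hd : 0 < d)
    (hmin : ∀ v, d ≤ (G.neighborSet v).ncard) (hmax : ∀ v, (G.neighborSet v).ncard ≤ D)
    (hk : D ≤ k * d) :
    ∃ (f : V → V) (col : V → Fin k), (∀ v, G.Adj v (f v)) ∧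
      ∀ v w, f v = f w → col v = col w → v = w := by
  classical
  have hdeg : ∀ v, (G.neighborSet v).ncard = (G.neighborFinset v).card := fun v => by
    have h := Set.ncard_coe_finset (G.neighborFinset v)
    rwa [G.coe_neighborFinset v] at h
  have hall := (Finset.all_card_le_biUnion_card_iff_exists_injective
    (fun v : V => G.neighborFinset v ×ˢ (Finset.univ : Finset (Fin k)))).1 (by
      intro s
      set N := s.biUnion fun v => G.neighborFinset v with hN
      have e : (s.biUnion fun v => G.neighborFinset v ×ˢ (Finset.univ : Finset (Fin k)))
          = N ×ˢ Finset.univ := by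
        ext ⟨a, b⟩; simp [hN]
      rw [e, Finset.card_product, Finset.card_univ, Fintype.card_fin]
      have h1 : s.card * d ≤ N.card * D := by
        apply Finset.card_mul_le_card_mul (fun a b => G.Adj a b)
        · intro a ha
          refine (hmin a).trans ?_
          rw [hdeg]
          apply Finset.card_le_card
          intro b hb
          simp only [Finset.mem_bipartiteAbove, hN, Finset.mem_biUnion]
          exact ⟨⟨a, ha, hb⟩, by simpa using hb⟩
        · intro b _
          refine le_trans ?_ (hmax b)
          rw [hdeg]
          apply Finset.card_le_card
          intro a ha
          simp only [Finset.mem_bipartiteBelow] at ha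
          simpa using ha.2.symm
      have h2 : s.card * d ≤ (N.card * k) * d := by
        calc s.card * d ≤ N.card * D := h1
          _ ≤ N.card * (k * d) := Nat.mul_le_mul_left _ hk
          _ = _ := by ring
      exact Nat.le_of_mul_le_mul_right h2 hd)
  obtain ⟨g, hg, hmem⟩ := hall
  refine ⟨fun v => (g v).1, fun v => (g v).2, fun v => ?_, fun v w h1 h2 => ?_⟩
  · have := hmem v
    simpa using this
  · exact hg (Prod.ext h1 h2)

/-- The edges `{v, f v}` with `v ∈ S` cover `A` and are properly colored by `c`. The last conjunct,
that `c` agrees with `col` on edges leaving `A`, carries the induction. -/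
lemma exists_cover {V : Type*} {r : ℕ} (f : V → V) (col : V → Fin (r + 2))
    (hf : ∀ v, f v ≠ v) (hinj : ∀ v w, f v = f w → col v = col w → v = w) (A : Finset V) :
    ∃ (S : Finset V) (c : V → Fin (r + 2)), S ⊆ A ∧
      (∀ v ∈ A, v ∈ S ∨ ∃ u ∈ S, f u = v) ∧
      (∀ v ∈ S, ∀ w ∈ S, v ≠ w → (f v = w ∨ f v = f w) → c v ≠ c w) ∧
      (∀ v ∈ S, f v ∉ A → c v = col v) := by
  classical
  induction A using Finset.strongInduction with
  | H A ih =>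
  by_cases hA : ∃ v ∈ A, ∀ u ∈ A, f u ≠ v
  · obtain ⟨v, hv, hleaf⟩ := hA
    obtain ⟨S, c, hSA, hcov, hprop, hcol⟩ := ih ((A.erase v).erase (f v))
      ((Finset.erase_subset _ _).trans_ssubset (Finset.erase_ssubset hv))
    have hS : ∀ w ∈ S, w ≠ f v ∧ w ≠ v ∧ w ∈ A := fun w hw => by
      simpa using hSA hw
    -- The new edge meets an old one only in `f v`, which is outside the old vertex set.
    have hsib : ∀ w ∈ S, f v = f w → c w ≠ col v := fun w hw h hc => by
      rw [hcol w hw (by simp [h])] at hc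
      exact (hS w hw).2.1 (hinj w v h.symm hc)
    refine ⟨insert v S, Function.update c v (col v), ?_, ?_, ?_, ?_⟩
    · intro w hw
      rcases Finset.mem_insert.1 hw with rfl | hw
      · exact hv
      · exact (hS w hw).2.2
    · intro w hw
      by_cases h1 : w = v
      · exact Or.inl (by simp [h1])
      by_cases h2 : w = f v
      · exact Or.inr ⟨v, by simp, h2.symm⟩
      rcases hcov w (by simp [h1, h2, hw]) with h | ⟨u, hu, h⟩
      · exact Or.inl (by simp [h])
      · exact Or.inr ⟨u, by simp [hu], h⟩
    · intro x hx y hy hxy h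
      rcases Finset.mem_insert.1 hx with hxS | hxS <;>
        rcases Finset.mem_insert.1 hy with hyS | hyS
      · exact absurd (hxS.trans hyS.symm) hxy
      · subst hxS
        rw [Function.update_self, Function.update_of_ne hxy.symm]
        rcases h with h | h
        · exact absurd h.symm (hS y hyS).1
        · exact (hsib y hyS h).symm
      · subst hyS
        rw [Function.update_self, Function.update_of_ne hxy]
        rcases h with h | h
        · exact absurd h (hleaf x (hS x hxS).2.2)
        · exact hsib x hxS h.symm
      · rw [Function.update_of_ne (hS x hxS).2.1, Function.update_of_ne (hS y hyS).2.1]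
        exact hprop x hxS y hyS hxy h
    · intro w hw hfw
      rcases Finset.mem_insert.1 hw with rfl | hw
      · simp
      · rw [Function.update_of_ne (hS w hw).2.1]
        exact hcol w hw (by simp [hfw])
  · push Not at hA
    have hsub : A ⊆ A.image f := fun v hv => Finset.mem_image.2 (hA v hv)
    have himg : A = A.image f := Finset.eq_of_subset_of_card_le hsub Finset.card_image_le
    have hinjA : Set.InjOn f A := Finset.card_image_iff.1 (by rw [← himg])
    have hmap : ∀ v ∈ A, f v ∈ A := fun v hv => by
      rw [himg]; exact Finset.mem_image_of_mem f hv
    obtain ⟨T, hT⟩ := Set.Finite.exists_minimal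
      (s := {T : Finset V | T ⊆ A ∧ ∀ v ∈ A, v ∈ T ∨ ∃ u ∈ T, f u = v})
      (A.powerset.finite_toSet.subset fun T hT => by simpa using hT.1)
      ⟨A, Finset.Subset.refl A, fun v hv => Or.inl hv⟩
    obtain ⟨⟨hTA, hcov⟩, hTmin⟩ := hT
    -- The middle one of three consecutive edges could be dropped from the cover.
    have hthree : ∀ u ∈ T, f u ∈ T → f (f u) ∉ T := by
      intro u hu hv hw
      have := hTmin (y := T.erase (f u)) ⟨(Finset.erase_subset _ _).trans hTA, fun x hx => by
        by_cases hxv : x = f u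
        · exact Or.inr ⟨u, Finset.mem_erase.2 ⟨(hf u).symm, hu⟩, hxv.symm⟩
        rcases hcov x hx with h | ⟨y, hy, h⟩
        · exact Or.inl (Finset.mem_erase.2 ⟨hxv, h⟩)
        · by_cases hyv : y = f u
          · subst hyv
            exact Or.inl (Finset.mem_erase.2 ⟨hxv, h ▸ hw⟩)
          · exact Or.inr ⟨y, Finset.mem_erase.2 ⟨hyv, hy⟩, h⟩⟩ (Finset.erase_subset _ _)
      exact (Finset.mem_erase.1 (this hv)).1 rfl
    refine ⟨T, fun v => if ∃ u ∈ T, f u = v then 1 else 0, hTA, hcov, ?_, ?_⟩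
    · intro v hv w hw hvw h
      rcases h with h | h
      · have h1 : ∃ u ∈ T, f u = w := ⟨v, hv, h⟩
        have h2 : ¬ ∃ u ∈ T, f u = v := by
          rintro ⟨u, hu, rfl⟩
          exact hthree u hu hv (h ▸ hw)
        simp only [h1, h2, if_true, if_false]
        simp
      · exact absurd (hinjA (hTA hv) (hTA hw) h) hvw
    · intro v hv h
      exact absurd (hmap v (hTA hv)) h

/-- For any graph without isolated vertices, `sp(G) ≤ 1 + ⌊Δ(G)/δ(G)⌋`. -/
theorem sp_le_one_add_ratio_floor {V : Type*} [Fintype V] (G : SimpleGraph V)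
    (hG : ∀ v : V, ∃ w : V, G.Adj v w) :
    sp G ≤ 1 + maxDeg G / minDeg G := by
  classical
  rcases isEmpty_or_nonempty V with hV | hV
  · refine Nat.sInf_le ⟨⊥, fun v => isEmptyElim v, fun _ => ⟨0, Nat.add_pos_left one_pos _⟩, fun e₁ _ _ h => ?_⟩
    obtain ⟨v, -⟩ := h
    exact isEmptyElim v
  have hmin : ∀ v, minDeg G ≤ (G.neighborSet v).ncard := fun v => Nat.sInf_le ⟨v, rfl⟩
  have hmax : ∀ v, (G.neighborSet v).ncard ≤ maxDeg G := fun v =>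
    le_csSup (Set.finite_range _).bddAbove ⟨v, rfl⟩
  have hd : 0 < minDeg G := by
    obtain ⟨v, hv⟩ := Nat.sInf_mem (Set.range_nonempty fun v : V => (G.neighborSet v).ncard)
    obtain ⟨w, hw⟩ := hG v
    have : 0 < (G.neighborSet v).ncard := (Set.ncard_pos (Set.toFinite _)).2 ⟨w, hw⟩
    unfold minDeg
    rw [← hv]
    exact this
  obtain ⟨v₀⟩ := id hV
  have hq : 0 < maxDeg G / minDeg G := Nat.div_pos ((hmin v₀).trans (hmax v₀)) hd
  have hk : maxDeg G ≤ (1 + maxDeg G / minDeg G) * minDeg G := by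
    rw [add_comm]
    exact (Nat.lt_mul_of_div_lt (Nat.lt_succ_self _) hd).le
  obtain ⟨r, hr⟩ : ∃ r, 1 + maxDeg G / minDeg G = r + 2 :=
    ⟨maxDeg G / minDeg G - 1, by omega⟩
  rw [hr] at hk ⊢
  obtain ⟨f, col, hadj, hinj⟩ := exists_pointer G hd hmin hmax hk
  obtain ⟨S, c, -, hcov, hprop, -⟩ :=
    exists_cover f col (fun v => (hadj v).ne') hinj Finset.univ
  let H : G.Subgraph :=
    { verts := Set.univ
      Adj := fun x y => (x ∈ S ∧ f x = y) ∨ (y ∈ S ∧ f y = x)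
      adj_sub := by
        rintro x y (⟨-, rfl⟩ | ⟨-, rfl⟩)
        · exact hadj x
        · exact (hadj y).symm
      edge_vert := fun _ => Set.mem_univ _
      symm := ⟨fun x y h => h.symm⟩ }
  have hrep : ∀ e : H.edgeSet, ∃ v ∈ S, (e : Sym2 V) = s(v, f v) := by
    rintro ⟨e, he⟩
    induction e using Sym2.ind with
    | _ x y =>
      have hxy : (x ∈ S ∧ f x = y) ∨ (y ∈ S ∧ f y = x) := he
      change ∃ v ∈ S, s(x, y) = s(v, f v)
      clear he
      rcases hxy with ⟨h, rfl⟩ | ⟨h, rfl⟩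
      · exact ⟨x, h, rfl⟩
      · exact ⟨y, h, Sym2.eq_swap⟩
  choose g hgS hge using hrep
  refine Nat.sInf_le ⟨H, fun v => ?_, fun e => c (g e), fun e₁ e₂ hne h => ?_⟩
  · rcases hcov v (Finset.mem_univ v) with h | ⟨u, hu, h⟩
    · exact ⟨f v, Or.inl ⟨h, rfl⟩⟩
    · exact ⟨u, Or.inr ⟨hu, h⟩⟩
  · obtain ⟨v, h1, h2⟩ := h
    have hg : g e₁ ≠ g e₂ := fun h => hne (Subtype.ext (by rw [hge e₁, hge e₂, h]))
    rw [hge e₁, Sym2.mem_iff] at h1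
    rw [hge e₂, Sym2.mem_iff] at h2
    rcases h1 with h1 | h1 <;> rcases h2 with h2 | h2
    · exact absurd (h1.symm.trans h2) hg
    · exact (hprop _ (hgS e₂) _ (hgS e₁) hg.symm (Or.inl (h2.symm.trans h1))).symm
    · exact hprop _ (hgS e₁) _ (hgS e₂) hg (Or.inl (h1.symm.trans h2))
    · exact hprop _ (hgS e₁) _ (hgS e₂) hg (Or.inr (h1.symm.trans h2))
end

section
/- For any non-regular graph G (i.e., Δ(G) ≠ δ(G)) without isolated vertices, sp(G) ≤ ⌈Δ(G)/δ(G)⌉. -/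
/-!
Let `k = ⌈Δ/δ⌉`; non-regularity gives `k ≥ 2`. Counting edges between a vertex set `X` and its
neighbourhood `N(X)` gives `δ|X| ≤ Δ|N(X)|`, hence `|X| ≤ k|N(X)|`, and Hall's theorem (with `k`
copies of each target) yields `f : V → V` with `f v` adjacent to `v` and all fibres of size at most
`k` (`exists_bounded_fiber_map`).

The edges `{v, f v}` form a spanning subgraph of maximum degree at most `k + 1`. To get down to `k`,
take a maximal partial kernel of the functional digraph `v ↦ f v` (`exists_partial_kernel`): disjoint
sets `A`, `B` such that all preimages of a vertex of `A` lie in `B` and each vertex of `B` has a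
preimage in `A`. Every vertex of the remaining set `R` has a preimage in `R`, so `f` is injective on
`R` (it consists of cycles), and no vertex of `R` has a preimage in `A`. Keeping only the edges
`{v, f v}` with `v ∉ B` leaves degree at most `1` on `A`, at most `k` on `B` and at most `2` on `R`
(`exists_spanning_degree_le`).

Finally, a minimal spanning subgraph of this one is a star forest with at most `k` edges per star,
which is properly edge-coloured with `k` colours by injectively labelling the leaves of each star
(`exists_colorable_of_degree_le`).
-/

open SimpleGraph

variable {V : Type*}

/-- Hall's theorem with `k` copies of each target vertex. -/
lemma exists_bounded_fiber_map [Fintype V] (G : SimpleGraph V) (d D k : ℕ) (hd : 0 < d)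
    (hdk : D ≤ k * d) (hmin : ∀ v, d ≤ (G.neighborSet v).ncard)
    (hmax : ∀ v, (G.neighborSet v).ncard ≤ D) :
    ∃ f : V → V, (∀ v, G.Adj v (f v)) ∧ ∀ v, {u | f u = v}.ncard ≤ k := by
  classical
  have hcard : ∀ v, (G.neighborSet v).ncard = (G.neighborFinset v).card := fun v => by
    rw [← Set.ncard_coe_finset, SimpleGraph.coe_neighborFinset]
  obtain ⟨g, hg, hgt⟩ := (Finset.all_card_le_biUnion_card_iff_exists_injective
    (fun v : V => G.neighborFinset v ×ˢ (Finset.univ : Finset (Fin k)))).1 (by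
      intro X
      set N := X.biUnion (fun v => G.neighborFinset v) with hN
      have h1 : X.card * d ≤ N.card * D := by
        refine Finset.card_mul_le_card_mul G.Adj ?_ ?_
        · intro a ha
          refine (hmin a).trans ?_
          rw [hcard]
          refine Finset.card_le_card fun b hb => ?_
          rw [Finset.mem_bipartiteAbove]
          exact ⟨Finset.mem_biUnion.2 ⟨a, ha, hb⟩, by simpa using hb⟩
        · intro b _
          refine le_trans ?_ (hmax b)
          rw [hcard]
          refine Finset.card_le_card fun a ha => ?_
          rw [Finset.mem_bipartiteBelow] at ha
          simpa using ha.2.symm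
      have h2 : X.biUnion (fun v => G.neighborFinset v ×ˢ (Finset.univ : Finset (Fin k)))
          = N ×ˢ Finset.univ := by
        ext ⟨a, i⟩
        simp [hN]
      rw [h2, Finset.card_product, Finset.card_univ, Fintype.card_fin]
      refine Nat.le_of_mul_le_mul_right (h1.trans ?_) hd
      rw [mul_assoc]
      exact Nat.mul_le_mul_left _ hdk)
  refine ⟨fun v => (g v).1, fun v => ?_, fun v => ?_⟩
  · have := hgt v
    simpa using (Finset.mem_product.1 this).1
  · have : {u | (g u).1 = v}.ncard ≤ (Set.univ : Set (Fin k)).ncard := by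
      refine Set.ncard_le_ncard_of_injOn (fun u => (g u).2) (fun _ _ => Set.mem_univ _) ?_
      intro a ha b hb hab
      exact hg (Prod.ext (ha.trans hb.symm) hab)
    simpa [Set.ncard_univ] using this

/-- A maximal partial kernel `(A, B)` of the functional digraph of `f`. The last two clauses are
the obstructions to adding a vertex to `A` or to `B`. -/
lemma exists_partial_kernel [Fintype V] (f : V → V) :
    ∃ A B : Finset V, Disjoint A B ∧ (∀ u, f u ∈ A → u ∈ B) ∧ (∀ v ∈ B, ∃ u ∈ A, f u = v) ∧
      (∀ v, v ∉ A → v ∉ B → ∃ u, u ∉ B ∧ f u = v) ∧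
      (∀ u ∈ A, f u ∉ A → f u ∈ B) := by
  classical
  let P : Finset V × Finset V → Prop := fun p =>
    Disjoint p.1 p.2 ∧ (∀ u, f u ∈ p.1 → u ∈ p.2) ∧ ∀ v ∈ p.2, ∃ u ∈ p.1, f u = v
  obtain ⟨⟨A, B⟩, hP, hmax⟩ := Finset.exists_max_image (Finset.univ.filter P)
    (fun p => p.1.card + p.2.card) ⟨(∅, ∅), by simp [P]⟩
  simp only [Finset.mem_filter, Finset.mem_univ, true_and] at hP hmax
  obtain ⟨hdisj, hA, hB⟩ := hP
  simp only at hdisj hA hB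
  refine ⟨A, B, hdisj, hA, hB, ?_, ?_⟩
  · intro v hvA hvB
    by_contra! hcon
    have := hmax (insert v A, B) ⟨?_, ?_, ?_⟩
    · simp [Finset.card_insert_of_notMem hvA] at this
    · simpa [Finset.disjoint_insert_left] using ⟨hvB, hdisj⟩
    · intro u hu
      rcases Finset.mem_insert.1 hu with h | h
      · by_contra hub
        exact hcon u hub h
      · exact hA u h
    · intro w hw
      obtain ⟨u, hu, huw⟩ := hB w hw
      exact ⟨u, Finset.mem_insert_of_mem hu, huw⟩
  · intro u hu hfA
    by_contra hfB
    have := hmax (A, insert (f u) B) ⟨?_, ?_, ?_⟩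
    · simp [Finset.card_insert_of_notMem hfB] at this
    · simpa [Finset.disjoint_insert_right] using ⟨hfA, hdisj⟩
    · intro w hw
      exact Finset.mem_insert_of_mem (hA w hw)
    · intro w hw
      rcases Finset.mem_insert.1 hw with h | h
      · exact ⟨u, hu, h.symm⟩
      · exact hB w h

lemma exists_spanning_degree_le [Fintype V] (G : SimpleGraph V) (k : ℕ) (hk : 2 ≤ k)
    (f : V → V) (hf : ∀ v, G.Adj v (f v)) (hfib : ∀ v, {u | f u = v}.ncard ≤ k) :
    ∃ H ≤ G, (∀ v, ∃ w, H.Adj v w) ∧ ∀ v, (H.neighborSet v).ncard ≤ k := by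
  classical
  obtain ⟨A, B, hdisj, hA, hB, hR, hAB⟩ := exists_partial_kernel f
  let H : SimpleGraph V :=
    { Adj := fun v w => (v ∉ B ∧ f v = w) ∨ (w ∉ B ∧ f w = v)
      symm := ⟨fun v w h => h.symm⟩
      loopless := ⟨fun v h => by
        rcases h with h | h <;> exact (hf v).ne h.2.symm⟩ }
  -- `f` is injective on the uncovered set, since that set is contained in its own image.
  have hinj : Set.InjOn f ((A ∪ B)ᶜ : Finset V) := by
    refine Finset.card_image_iff.1 (le_antisymm Finset.card_image_le
      (Finset.card_le_card fun v hv => ?_))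
    simp only [Finset.mem_compl, Finset.mem_union, not_or] at hv
    obtain ⟨u, huB, huv⟩ := hR v hv.1 hv.2
    refine Finset.mem_image.2 ⟨u, ?_, huv⟩
    simp only [Finset.mem_compl, Finset.mem_union, not_or]
    refine ⟨fun huA => ?_, huB⟩
    subst huv
    exact hv.2 (hAB u huA hv.1)
  refine ⟨H, ?_, fun v => ?_, fun v => ?_⟩
  · rintro v w (⟨-, rfl⟩ | ⟨-, rfl⟩)
    · exact hf v
    · exact (hf w).symm
  · by_cases hv : v ∈ B
    · obtain ⟨u, hu, huv⟩ := hB v hv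
      exact ⟨u, Or.inr ⟨Finset.disjoint_left.1 hdisj hu, huv⟩⟩
    · exact ⟨f v, Or.inl ⟨hv, rfl⟩⟩
  · by_cases hvB : v ∈ B
    · refine (Set.ncard_le_ncard ?_ (Set.toFinite _)).trans (hfib v)
      rintro w (h | h)
      · exact absurd hvB h.1
      · exact h.2
    · by_cases hvA : v ∈ A
      · have : (H.neighborSet v) ⊆ {f v} := by
          rintro w (h | h)
          · exact h.2.symm
          · exact absurd (hA w (h.2 ▸ hvA)) h.1
        have := Set.ncard_le_ncard this (Set.toFinite _)
        rw [Set.ncard_singleton] at this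
        omega
      · obtain ⟨u, huB, huv⟩ := hR v hvA hvB
        have hmem : ∀ w, w ∉ B → f w = v → w ∈ (((A ∪ B)ᶜ : Finset V) : Set V) := by
          rintro w hw rfl
          simp only [Finset.coe_compl, Finset.coe_union, Set.mem_compl_iff, Set.mem_union,
            Finset.mem_coe, not_or]
          exact ⟨fun hwA => hvB (hAB w hwA hvA), hw⟩
        have : (H.neighborSet v) ⊆ {f v, u} := by
          rintro w (h | h)
          · exact Or.inl h.2.symm
          · exact Or.inr (hinj (hmem w h.1 h.2) (hmem u huB huv) (h.2.trans huv.symm))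
        have h2 := Set.ncard_insert_le (f v) {u}
        rw [Set.ncard_singleton] at h2
        exact (Set.ncard_le_ncard this (Set.toFinite _)).trans (h2.trans hk)

/-- A minimal spanning subgraph is a star forest: each edge has an endpoint of degree one. -/
lemma exists_star_forest [Fintype V] (H : SimpleGraph V) (hH : ∀ v, ∃ w, H.Adj v w) :
    ∃ S ≤ H, (∀ v, ∃ w, S.Adj v w) ∧
      ∀ v w, S.Adj v w → (∀ x, S.Adj v x → x = w) ∨ ∀ x, S.Adj w x → x = v := by
  classical
  obtain ⟨S, hSH, hS⟩ := (Set.toFinite {S : SimpleGraph V | ∀ v, ∃ w, S.Adj v w}).exists_le_minimal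
    (a := H) hH
  refine ⟨S, hSH, hS.1, fun v w hvw => ?_⟩
  by_contra! hcon
  obtain ⟨⟨x, hvx, hxw⟩, ⟨y, hwy, hyv⟩⟩ := hcon
  have hdel : S ≤ S.deleteEdges {s(v, w)} := by
    refine hS.2 (fun a => ?_) (deleteEdges_le _)
    by_cases hav : a = v
    · subst hav
      exact ⟨x, by simp [deleteEdges_adj, hvx, hxw, hvw.ne]⟩
    · by_cases haw : a = w
      · subst haw
        exact ⟨y, by simp [deleteEdges_adj, hwy, hyv, hvw.ne']⟩
      · obtain ⟨b, hb⟩ := hS.1 a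
        exact ⟨b, by simp [deleteEdges_adj, hb, hav, haw]⟩
  have := hdel hvw
  simp [deleteEdges_adj] at this

lemma exists_colorable_of_degree_le [Fintype V] (G H : SimpleGraph V) (hHG : H ≤ G) (k : ℕ)
    (hH : ∀ v, ∃ w, H.Adj v w) (hdeg : ∀ v, (H.neighborSet v).ncard ≤ k) :
    ∃ K : G.Subgraph, SpanningSub K ∧ EdgeColorable K k := by
  classical
  obtain ⟨S, hSH, hS, hstar⟩ := exists_star_forest H hH
  have hφ : ∀ v, ∃ φ : S.neighborSet v → Fin k, Function.Injective φ := by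
    intro v
    have h : Fintype.card (S.neighborSet v) ≤ Fintype.card (Fin k) := by
      rw [Fintype.card_fin, ← Nat.card_eq_fintype_card, Nat.card_coe_set_eq]
      exact (Set.ncard_le_ncard (fun w hw => hSH hw) (Set.toFinite _)).trans (hdeg v)
    obtain ⟨e⟩ := Function.Embedding.nonempty_of_card_le h
    exact ⟨e, e.injective⟩
  choose φ hφ using hφ
  let K : G.Subgraph := SimpleGraph.toSubgraph S (hSH.trans hHG)
  -- Each edge has a centre `a` and a leaf `b`; its colour is the label of `b` at `a`.
  have hends : ∀ e : K.edgeSet, ∃ a b, ∃ h : S.Adj a b, (e : Sym2 V) = s(a, b) ∧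
      ∀ x, S.Adj b x → x = a := by
    rintro ⟨e, he⟩
    induction e with
    | _ v w =>
      have hvw : S.Adj v w := he
      rcases hstar v w hvw with h | h
      · exact ⟨w, v, hvw.symm, Sym2.eq_swap, h⟩
      · exact ⟨v, w, hvw, rfl, h⟩
  choose a b hab he hleaf using hends
  -- A leaf lies on no edge other than its own.
  have hb : ∀ e₁ e₂ : K.edgeSet, b e₁ ∈ (e₂ : Sym2 V) → e₁ = e₂ := by
    intro e₁ e₂ h
    apply Subtype.ext
    rw [he e₂, Sym2.mem_iff] at h
    rcases h with h | h
    · have h2 := hleaf e₁ (b e₂) (h ▸ hab e₂)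
      rw [he e₁, he e₂, h, h2, Sym2.eq_swap]
    · have h2 := hleaf e₁ (a e₂) (h ▸ (hab e₂).symm)
      rw [he e₁, he e₂, h, h2]
  refine ⟨K, hS, fun e => φ (a e) ⟨b e, hab e⟩, ?_⟩
  rintro e₁ e₂ hne ⟨v, hv₁, hv₂⟩ hcol
  have hva₁ : v = a e₁ := by
    have h := hv₁
    rw [he e₁, Sym2.mem_iff] at h
    exact h.resolve_right fun h => hne (hb e₁ e₂ (h ▸ hv₂))
  have hva₂ : v = a e₂ := by
    have h := hv₂
    rw [he e₂, Sym2.mem_iff] at h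
    exact h.resolve_right fun h => hne (hb e₂ e₁ (h ▸ hv₁)).symm
  have key : ∀ (x y c d : V) (hx : S.Adj x c) (hy : S.Adj y d), x = y →
      φ x ⟨c, hx⟩ = φ y ⟨d, hy⟩ → c = d := by
    rintro x _ c d hx hy rfl h
    exact congrArg Subtype.val (hφ x h)
  have hbb := key _ _ _ _ (hab e₁) (hab e₂) (hva₁.symm.trans hva₂) hcol
  apply hne (hb e₁ e₂ _)
  rw [he e₂, hbb]
  exact Sym2.mem_mk_right _ _

/-- For any non-regular graph without isolated vertices, `sp(G) ≤ ⌈Δ(G)/δ(G)⌉`. -/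
theorem sp_le_ratio_ceil {V : Type*} [Fintype V] (G : SimpleGraph V)
    (hG : ∀ v : V, ∃ w : V, G.Adj v w) (hnonreg : maxDeg G ≠ minDeg G) :
    (sp G : ℤ) ≤ ⌈(maxDeg G : ℚ) / (minDeg G : ℚ)⌉ := by
  have hne : Nonempty V := by
    by_contra h
    rw [not_nonempty_iff] at h
    exact hnonreg (by rw [maxDeg, minDeg, Set.range_eq_empty]; simp)
  have hmin : ∀ v, minDeg G ≤ (G.neighborSet v).ncard := fun v => Nat.sInf_le ⟨v, rfl⟩
  have hmax : ∀ v, (G.neighborSet v).ncard ≤ maxDeg G := fun v =>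
    le_csSup (Set.finite_range _).bddAbove ⟨v, rfl⟩
  have hpos : 0 < minDeg G := by
    obtain ⟨v, hv⟩ := Nat.sInf_mem (Set.range_nonempty fun v : V => (G.neighborSet v).ncard)
    have hv' : (G.neighborSet v).ncard = minDeg G := hv
    rw [← hv', Set.ncard_pos]
    exact hG v
  have hlt : minDeg G < maxDeg G :=
    lt_of_le_of_ne ((hmin hne.some).trans (hmax hne.some)) hnonreg.symm
  have hposQ : (0 : ℚ) < minDeg G := by exact_mod_cast hpos
  rw [← Int.natCast_ceil_eq_ceil (by positivity)]
  set k := ⌈(maxDeg G : ℚ) / (minDeg G : ℚ)⌉₊ with hkdef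
  have hdk : maxDeg G ≤ k * minDeg G := by
    have h := Nat.le_ceil ((maxDeg G : ℚ) / (minDeg G : ℚ))
    rw [div_le_iff₀ hposQ] at h
    exact_mod_cast h
  have hk : 2 ≤ k := by
    by_contra! h
    have : k * minDeg G ≤ 1 * minDeg G := Nat.mul_le_mul_right _ (by omega)
    omega
  obtain ⟨f, hf, hfib⟩ := exists_bounded_fiber_map G _ _ k hpos hdk hmin hmax
  obtain ⟨H, hHG, hH, hdeg⟩ := exists_spanning_degree_le G k hk f hf hfib
  exact_mod_cast Nat.sInf_le (exists_colorable_of_degree_le G H hHG k hH hdeg)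
end

section
/- For any positive integers a and b, there exists a tree G (without isolated vertices) such that sp(G) > a · (|V(G)|/ν(G))^b. -/
/-!
The tree is a spider: a centre with `k` pendant leaves and `k` legs of length two, so it has
`3k + 1` vertices. The outer edges of the legs form a matching of size `k`, hence `|V| / ν ≤ 4`
whatever `k ≥ 1` is (`le_matchNum_spider`). A spanning subgraph must use all `k` pendant edges at
the centre, which pairwise intersect, so `sp ≥ k` (`le_sp_spider`). Taking `k = a * 4 ^ b + 1`
gives the strict inequality.
-/

open SimpleGraph

variable {V : Type*}

/-- The parent relation of the spider on `Fin (3 * k + 1)`, with centre `0`: the vertices `3i + 1`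
are the pendant leaves, the vertices `3i + 2` are the middle vertices of the legs, and
`3i + 3` is the end of the leg through `3i + 2`. -/
def spiderParent (u v : ℕ) : Prop :=
  v ≠ 0 ∧ ((v % 3 = 0 ∧ v = u + 1) ∨ (v % 3 ≠ 0 ∧ u = 0))

/-- The spider with `k` pendant leaves and `k` legs of length two. -/
def spider (k : ℕ) : SimpleGraph (Fin (3 * k + 1)) where
  Adj u v := spiderParent u v ∨ spiderParent v u
  symm := ⟨fun _ _ h => h.symm⟩
  loopless := ⟨fun v h => by unfold spiderParent at h; omega⟩

theorem spider_adj {k : ℕ} {u v : Fin (3 * k + 1)} :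
    (spider k).Adj u v ↔ spiderParent u v ∨ spiderParent v u := Iff.rfl

theorem spider_connected (k : ℕ) : (spider k).Connected := by
  have near : ∀ v : Fin (3 * k + 1), v.val % 3 ≠ 0 → (spider k).Reachable 0 v := fun v hv =>
    SimpleGraph.Adj.reachable (by rw [spider_adj]; left; unfold spiderParent; rw [Fin.val_zero]; omega)
  have main : ∀ v : Fin (3 * k + 1), (spider k).Reachable 0 v := by
    intro v
    by_cases hv : v.val % 3 = 0
    · by_cases h0 : v.val = 0
      · rw [show v = 0 from Fin.ext h0]
      · have hlt : v.val - 1 < 3 * k + 1 := by omega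
        refine (near ⟨v.val - 1, hlt⟩ (by simp; omega)).trans (SimpleGraph.Adj.reachable ?_)
        rw [spider_adj]; left; unfold spiderParent; dsimp only; omega
    · exact near v hv
  have : Nonempty (Fin (3 * k + 1)) := ⟨0⟩
  exact ⟨fun u v => (main u).symm.trans (main v)⟩

/-- Every edge joins a non-central vertex to its parent, so there are at most `3k` edges; by
connectedness this makes the spider a tree. -/
theorem spider_isTree (k : ℕ) : (spider k).IsTree := by
  rw [SimpleGraph.isTree_iff_connected_and_card]
  refine ⟨spider_connected k, le_antisymm ?_ (spider_connected k).card_vert_le_card_edgeSet_add_one⟩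
  let par : Fin (3 * k) → Fin (3 * k + 1) := fun i =>
    if (i.val + 1) % 3 = 0 then i.castSucc else 0
  have hsub : (spider k).edgeSet ⊆ Set.range fun i : Fin (3 * k) => s(i.succ, par i) := by
    intro e
    induction e using Sym2.ind with
    | _ u v =>
      have key : ∀ u v : Fin (3 * k + 1), spiderParent u v →
          ∃ i : Fin (3 * k), s(i.succ, par i) = s(v, u) := by
        intro u v h
        unfold spiderParent at h
        refine ⟨⟨v.val - 1, by omega⟩, ?_⟩
        congr 2
        · ext; simp; omega
        · ext; simp only [par]; split_ifs <;> simp <;> omega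
      intro h
      rcases h with h | h
      · obtain ⟨i, hi⟩ := key _ _ h
        exact ⟨i, hi.trans Sym2.eq_swap⟩
      · exact key _ _ h
  have h1 := Set.ncard_le_ncard hsub (Set.toFinite _)
  have h2 : (Set.range fun i : Fin (3 * k) => s(i.succ, par i)).ncard ≤ 3 * k := by
    rw [← Set.image_univ]
    refine (Set.ncard_image_le (Set.toFinite _)).trans ?_
    simp [Set.ncard_univ]
  rw [Nat.card_coe_set_eq]
  simp
  omega

/-- The outer edges of the legs, as a subgraph of the spider. -/
def spiderMatching (k : ℕ) : (spider k).Subgraph where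
  verts := {v | v.val ≠ 0 ∧ v.val % 3 ≠ 1}
  Adj u v := (u.val % 3 = 2 ∧ v.val = u.val + 1) ∨ (v.val % 3 = 2 ∧ u.val = v.val + 1)
  adj_sub := by intro u v h; rw [spider_adj]; unfold spiderParent; omega
  edge_vert := by intro u v h; simp only [Set.mem_ofPred_eq]; omega
  symm := ⟨fun _ _ h => h.symm⟩

theorem spiderMatching_isMatching (k : ℕ) : (spiderMatching k).IsMatching := by
  intro v hv
  simp only [spiderMatching, Set.mem_ofPred_eq] at hv ⊢
  have := v.isLt
  by_cases h : v.val % 3 = 2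
  · refine ⟨⟨v.val + 1, by omega⟩, ?_, ?_⟩
    · simp; omega
    · intro w hw; ext; simp; omega
  · refine ⟨⟨v.val - 1, by omega⟩, ?_, ?_⟩
    · simp; omega
    · intro w hw; ext; simp; omega

theorem le_matchNum_spider (k : ℕ) : k ≤ matchNum (spider k) := by
  have hk : k ≤ (spiderMatching k).edgeSet.ncard := by
    let g : Fin k → Sym2 (Fin (3 * k + 1)) := fun i =>
      s(⟨3 * i.val + 2, by omega⟩, ⟨3 * i.val + 3, by omega⟩)
    have hg : Function.Injective g := by
      intro i j h
      simp only [g, Sym2.eq_iff, Fin.mk.injEq] at h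
      ext; omega
    have hsub : Set.range g ⊆ (spiderMatching k).edgeSet := by
      rintro _ ⟨i, rfl⟩
      simp only [g, SimpleGraph.Subgraph.mem_edgeSet, spiderMatching]
      exact Or.inl ⟨by omega, trivial⟩
    have := Set.ncard_le_ncard hsub (Set.toFinite _)
    rwa [← Set.image_univ, Set.ncard_image_of_injective _ hg, Set.ncard_univ, Nat.card_fin] at this
  refine hk.trans (le_csSup ?_ ⟨_, spiderMatching_isMatching k, rfl⟩)
  refine ⟨(spider k).edgeSet.ncard, ?_⟩
  rintro _ ⟨M, -, rfl⟩
  exact Set.ncard_le_ncard M.edgeSet_subset (Set.toFinite _)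

theorem spider_no_isolated {k : ℕ} (hk : 0 < k) (v : Fin (3 * k + 1)) :
    ∃ w, (spider k).Adj v w := by
  have : Nontrivial (Fin (3 * k + 1)) := Fin.nontrivial_iff_two_le.2 (by omega)
  exact (spider_connected k).preconnected.exists_adj_of_nontrivial v

theorem le_sp_spider {k : ℕ} (hk : 0 < k) : k ≤ sp (spider k) := by
  refine le_csInf ?_ ?_
  -- The set must be nonempty, since `sInf ∅ = 0`: colour all edges of the spider differently.
  · refine ⟨Nat.card (⊤ : (spider k).Subgraph).edgeSet, ⊤, fun v => spider_no_isolated hk v,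
      Finite.equivFin _, fun e₁ e₂ hne _ h => hne ((Finite.equivFin _).injective h)⟩
  · rintro m ⟨H, hH, f, hf⟩
    have hleaf : ∀ i : Fin k, s(⟨3 * i.val + 1, by omega⟩, 0) ∈ H.edgeSet := by
      intro i
      obtain ⟨w, hw⟩ := hH ⟨3 * i.val + 1, by omega⟩
      have h0 : w = 0 := by
        have := H.adj_sub hw
        rw [spider_adj] at this
        unfold spiderParent at this
        ext; simp at this ⊢; omega
      rw [h0] at hw
      exact hw
    have hinj : Function.Injective fun i : Fin k => f ⟨_, hleaf i⟩ := by
      intro i j hij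
      by_contra hne
      refine hf _ _ ?_ ⟨0, by simp, by simp⟩ hij
      intro h
      simp only [Subtype.mk.injEq, Sym2.eq_iff, Fin.ext_iff, Fin.val_zero] at h
      exact hne (Fin.ext (by omega))
    simpa using Fintype.card_le_of_injective _ hinj

/-- For any positive integers `a` and `b`, there is a tree `G` (without isolated vertices)
with `sp(G) > a * (|V(G)| / ν(G))^b`. -/
theorem exists_tree_sp_gt {a b : ℕ} (ha : 0 < a) (hb : 0 < b) :
    ∃ (n : ℕ) (G : SimpleGraph (Fin n)), G.IsTree ∧ (∀ v, ∃ w, G.Adj v w) ∧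
      (a : ℚ) * ((Fintype.card (Fin n) : ℚ) / (matchNum G : ℚ)) ^ b < (sp G : ℚ) := by
  obtain ⟨k, hk⟩ : ∃ k, k = a * 4 ^ b + 1 := ⟨_, rfl⟩
  have hk0 : 0 < k := by omega
  refine ⟨3 * k + 1, spider k, spider_isTree k, spider_no_isolated hk0, ?_⟩
  have hm : (k : ℚ) ≤ matchNum (spider k) := by exact_mod_cast le_matchNum_spider k
  have hs : (k : ℚ) ≤ sp (spider k) := by exact_mod_cast le_sp_spider hk0
  have hk1 : (1 : ℚ) ≤ k := by exact_mod_cast hk0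
  have hratio : (Fintype.card (Fin (3 * k + 1)) : ℚ) / (matchNum (spider k) : ℚ) ≤ 4 := by
    rw [div_le_iff₀ (by linarith), Fintype.card_fin]
    push_cast
    linarith
  calc (a : ℚ) * ((Fintype.card (Fin (3 * k + 1)) : ℚ) / (matchNum (spider k) : ℚ)) ^ b
      ≤ a * 4 ^ b := by gcongr
    _ < k := by rw [hk]; push_cast; linarith
    _ ≤ sp (spider k) := hs
end
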